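/- arXiv:1309.5828 — 5 statements merged into one kernel-verified Lean document; each statement's English description precedes it below -/
import Mathlib

section
/- For every real x > 0, every real α > 0 with α not an integer, and every real β, ∫₀^{π/2} cos^{α−1}(v) · cos((x/2)·tan v + βv) dv = (π·Γ(α)·e^{−x/2} / (2^α · Γ((α−β+1)/2) · Γ((α+β+1)/2))) · φ((β−α+1)/2, 1−α, x) − (π·cos((α−β)π/2) · x^α · e^{−x/2} / (2^α · sin(απ) · Γ(α+1))) · φ((β+α+1)/2, 1+α, x). -/
/-!
Write `a = (α - β + 1) / 2`, `b = (α + β + 1) / 2`, so that `a + b = α + 1` and `b - a = β`. The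
substitution `v = arctan t` turns the integral into `cosInt a b x`, which by evenness is half the
real part of `∫ e^(ixt/2) (1 + it)^(-a) (1 - it)^(-b) dt` over the real line.

Suppose first that `a, b > 0`. Then `(1 + it)^(-a) (1 - it)^(-b)` is the Fourier transform of the
density of the difference of two independent gamma variables (`fourier_gammaDiff`), and Fourier
inversion (`integral_cos_of_pos`) gives a multiple of the Laplace integral
`lapW a b x = ∫₀^∞ s^(b-1) (1+s)^(a-1) e^(-xs) ds`, that is, of Tricomi's function `U(b, a + b, x)`.
Its expansion in the two Kummer solutions (`connection`) is proved for `0 < a + b < 1` by matching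
the behaviour at `0⁺`, using uniqueness for Kummer's equation (`kummer_unique`), and carried to the
other non-integer `a + b > 0` by differentiation in `x`.

For general `a, b` with `a + b > 1`, the identity `2 cos θ cos ω = cos (ω + θ) + cos (ω - θ)` gives
`2 cosInt a b = cosInt (a - 1) b + cosInt a (b - 1)`, and the contiguous relations give the same
recurrence for the claimed value (`cosVal_rec`). Two inductions, on the lower bounds for `a` and
`b`, then reduce everything to positive parameters (`cosInt_eq`).

The Kummer functions enter through the regularized series `regM a c = φ(a, c, ·) / Γ(c)`, which is
defined and satisfies the contiguous relations for all `a` and `c`.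
-/

open MeasureTheory intervalIntegral
open scoped Nat

/-- Kummer's confluent hypergeometric series φ(α,β,x) = ∑ (α)ₙ/(β)ₙ · xⁿ/n!. -/
noncomputable def kummerPhi (α β x : ℝ) : ℝ :=
  ∑' n : ℕ, ((ascPochhammer ℝ n).eval α / (ascPochhammer ℝ n).eval β) * x ^ n / (n ! : ℝ)

namespace KummerCosine

open Set Filter Topology
open scoped FourierTransform Convolution

/-! ### The regularized Kummer series and its contiguous relations -/

/-- The functional equation of `1 / Γ`. It holds also at the poles, where `Γ` has junk value `0`. -/
theorem inv_Gamma_eq (s : ℝ) : (Real.Gamma s)⁻¹ = s * (Real.Gamma (s + 1))⁻¹ := by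
  rcases eq_or_ne s 0 with rfl | hs
  · simp [Real.Gamma_zero]
  · rw [Real.Gamma_add_one hs, mul_inv, ← mul_assoc, mul_inv_cancel₀ hs, one_mul]

/-- Coefficients of the regularized Kummer series, `(a)ₙ / (Γ(c + n) n!)`. The reciprocal of `Γ` at
a pole is `0` in both the analytic and the junk-value sense, so every `c` is allowed. -/
noncomputable def coef (a c : ℝ) (n : ℕ) : ℝ :=
  (ascPochhammer ℝ n).eval a * (Real.Gamma (c + n))⁻¹ / (n ! : ℝ)

/-- The regularized Kummer function `φ(a, c, x) / Γ(c)`, entire in `x` for all `a` and `c`. -/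
noncomputable def regM (a c x : ℝ) : ℝ := ∑' n : ℕ, coef a c n * x ^ n

theorem poch_succ_left (a : ℝ) (n : ℕ) :
    (ascPochhammer ℝ (n + 1)).eval a = a * (ascPochhammer ℝ n).eval (a + 1) := by
  rw [ascPochhammer_succ_left]; simp

theorem poch_shift (a : ℝ) (n : ℕ) :
    a * (ascPochhammer ℝ n).eval (a + 1) = (ascPochhammer ℝ n).eval a * (a + n) := by
  rw [← poch_succ_left, ascPochhammer_succ_eval]

theorem coef_succ (a c : ℝ) (n : ℕ) : (n + 1) * coef a c (n + 1) = a * coef (a + 1) (c + 1) n := by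
  have h : (n ! : ℝ) ≠ 0 := by positivity
  have h' : (n : ℝ) + 1 ≠ 0 := by positivity
  simp only [coef, poch_succ_left, Nat.factorial_succ]
  push_cast
  rw [show c + (n + 1 : ℝ) = c + 1 + n by ring]
  field_simp

theorem coef_contig_c (a c : ℝ) (n : ℕ) :
    coef a c n = a * coef (a + 1) (c + 1) n - (a - c) * coef a (c + 1) n := by
  simp only [coef]
  rw [inv_Gamma_eq (c + n), show c + 1 + n = c + n + 1 by ring]
  linear_combination (-(Real.Gamma (c + n + 1))⁻¹ / (n ! : ℝ)) * poch_shift a n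

theorem coef_contig_a (a c : ℝ) (n : ℕ) :
    coef (a + 1) c (n + 1) - coef a c (n + 1) = coef (a + 1) (c + 1) n := by
  have h : (n ! : ℝ) ≠ 0 := by positivity
  have h' : (n : ℝ) + 1 ≠ 0 := by positivity
  simp only [coef, poch_succ_left a, ascPochhammer_succ_eval n (a + 1), Nat.factorial_succ]
  push_cast
  rw [show c + (n + 1 : ℝ) = c + 1 + n by ring]
  field_simp
  ring

theorem summable_coef (a c x : ℝ) : Summable fun n => coef a c n * x ^ n := by
  refine summable_of_ratio_norm_eventually_le (r := 1 / 2) (by norm_num) ?_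
  have hlim : Tendsto (fun n : ℕ => (a + n) / (c + n) * (x / (n + 1))) atTop (𝓝 0) := by
    have h1 : Tendsto (fun n : ℕ => (a + n) / (c + n)) atTop (𝓝 1) := by
      have h0 := tendsto_add_mul_div_add_mul_atTop_nhds (𝕜 := ℝ) a c 1 one_ne_zero
      simpa using h0
    have h2 : Tendsto (fun n : ℕ => x / ((n : ℝ) + 1)) atTop (𝓝 0) :=
      tendsto_const_nhds.div_atTop (tendsto_natCast_atTop_atTop.atTop_add tendsto_const_nhds)
    simpa using h1.mul h2
  have hev := (hlim.norm.eventually (eventually_le_nhds (b := 1 / 2) (by norm_num)))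
  have hc : ∀ᶠ n : ℕ in atTop, 0 < c + n := by
    filter_upwards [(tendsto_natCast_atTop_atTop (R := ℝ)).eventually_gt_atTop (-c)] with n hn
    linarith
  filter_upwards [hev, hc] with n hn hcn
  have h : (n ! : ℝ) ≠ 0 := by positivity
  have h' : (n : ℝ) + 1 ≠ 0 := by positivity
  have key : coef a c (n + 1) * x ^ (n + 1)
      = ((a + n) / (c + n) * (x / (n + 1))) * (coef a c n * x ^ n) := by
    simp only [coef, ascPochhammer_succ_eval, Nat.factorial_succ]
    push_cast
    rw [inv_Gamma_eq (c + n), show c + (n + 1 : ℝ) = c + n + 1 by ring]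
    field_simp
    ring
  rw [key, norm_mul]
  gcongr

theorem regM_contig_c (a c x : ℝ) :
    regM a c x = a * regM (a + 1) (c + 1) x - (a - c) * regM a (c + 1) x := by
  have h1 := (summable_coef (a + 1) (c + 1) x).hasSum.mul_left a
  have h2 := (summable_coef a (c + 1) x).hasSum.mul_left (a - c)
  refine HasSum.tsum_eq ((h1.sub h2).congr_fun ?_)
  intro n
  rw [coef_contig_c a c n]
  ring

theorem regM_contig_a (a c x : ℝ) :
    regM (a + 1) c x - regM a c x = x * regM (a + 1) (c + 1) x := by
  have h1 := (summable_coef (a + 1) c x).hasSum.sub (summable_coef a c x).hasSum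
  have h2 := (summable_coef (a + 1) (c + 1) x).hasSum.mul_left x
  refine h1.unique ((hasSum_nat_add_iff' 1).mp ?_)
  have h0 : ∑ i ∈ Finset.range 1, (coef (a + 1) c i * x ^ i - coef a c i * x ^ i) = 0 := by
    simp [coef]
  rw [h0, sub_zero]
  refine h2.congr_fun fun n => ?_
  rw [← coef_contig_a]
  ring

theorem hasDerivAt_regM (a c x : ℝ) :
    HasDerivAt (regM a c) (a * regM (a + 1) (c + 1) x) x := by
  set R := |x| + 1
  have hterm : ∀ n : ℕ, ∀ y : ℝ, ((n : ℝ) + 1) * coef a c (n + 1) * y ^ n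
      = a * (coef (a + 1) (c + 1) n * y ^ n) := fun n y => by rw [coef_succ]; ring
  have hu : Summable fun n : ℕ => |coef a c n * (n * R ^ (n - 1))| := by
    refine (summable_nat_add_iff 1).mp ?_
    refine ((summable_coef (a + 1) (c + 1) R).mul_left a).abs.congr fun n => ?_
    rw [← hterm]
    push_cast
    congr 1
    ring
  have key := hasDerivAt_tsum_of_isPreconnected (g := fun n y => coef a c n * y ^ n)
    (g' := fun n y => coef a c n * (n * y ^ (n - 1))) (t := Metric.ball (0 : ℝ) R) (y₀ := 0)
    (y := x) hu Metric.isOpen_ball (convex_ball (0 : ℝ) R).isPreconnected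
    (fun n y _ => (hasDerivAt_pow n y).const_mul _)
    (fun n y hy => ?_) (Metric.mem_ball_self (by positivity)) (summable_coef a c 0)
    (by simp [R])
  · have hs : ∑' n : ℕ, coef a c n * (n * x ^ (n - 1)) = a * regM (a + 1) (c + 1) x := by
      have h2 := (summable_coef (a + 1) (c + 1) x).hasSum.mul_left a
      refine HasSum.tsum_eq ((hasSum_nat_add_iff' 1).mp ?_)
      simp only [Finset.range_one, Finset.sum_singleton, Nat.cast_zero, zero_mul, mul_zero,
        sub_zero]
      refine h2.congr_fun fun n => ?_
      rw [← hterm]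
      push_cast
      ring
    rw [← hs]
    exact key
  · have hy' : |y| ≤ R := by
      have := Metric.mem_ball.mp hy
      rw [Real.dist_eq, sub_zero] at this
      exact this.le
    rw [Real.norm_eq_abs, abs_mul, abs_mul (coef a c n), abs_mul, abs_mul (n : ℝ), abs_pow, abs_pow,
      abs_of_nonneg (show 0 ≤ R by positivity)]
    gcongr

theorem continuous_regM (a c : ℝ) : Continuous (regM a c) :=
  continuous_iff_continuousAt.mpr fun x => (hasDerivAt_regM a c x).continuousAt

theorem regM_zero (a c : ℝ) : regM a c 0 = (Real.Gamma c)⁻¹ := by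
  rw [regM, tsum_eq_single 0 (fun n hn => by simp [hn])]
  simp [coef]

theorem regM_pos {a c x : ℝ} (ha : 0 < a) (hc : 0 < c) (hx : 0 ≤ x) : 0 < regM a c x := by
  refine (summable_coef a c x).tsum_pos (fun n => ?_) 0 ?_
  · have := ascPochhammer_pos n a ha
    have := Real.Gamma_pos_of_pos (show 0 < c + n by positivity)
    simp only [coef]
    positivity
  · have := Real.Gamma_pos_of_pos hc
    simp [coef, this]

theorem kummerPhi_eq {a c : ℝ} (hc : ∀ m : ℕ, c ≠ -m) (x : ℝ) :
    kummerPhi a c x = Real.Gamma c * regM a c x := by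
  have hpoch : ∀ n : ℕ, Real.Gamma (c + n) = (ascPochhammer ℝ n).eval c * Real.Gamma c := by
    intro n
    induction n with
    | zero => simp
    | succ k ih =>
      have : c + k ≠ 0 := fun h => hc k (by linarith)
      rw [ascPochhammer_succ_eval]
      push_cast
      rw [← add_assoc, Real.Gamma_add_one this, ih]
      ring
  have hG : Real.Gamma c ≠ 0 := Real.Gamma_ne_zero hc
  rw [kummerPhi, regM, ← tsum_mul_left]
  refine tsum_congr fun n => ?_
  rw [coef, hpoch]
  field_simp

/-! ### The Laplace integral of Tricomi's function -/

/-- The Laplace integral `∫₀^∞ s^(b-1) (1+s)^(a-1) e^(-xs) ds`, which is `Γ(b)` times Tricomi's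
function `U(b, a + b, x)`. -/
noncomputable def lapW (a b x : ℝ) : ℝ :=
  ∫ s in Ioi (0 : ℝ), s ^ (b - 1) * (1 + s) ^ (a - 1) * Real.exp (-(x * s))

theorem integrableOn_gamma {b r : ℝ} (hb : 0 < b) (hr : 0 < r) :
    IntegrableOn (fun s : ℝ => s ^ (b - 1) * Real.exp (-(r * s))) (Ioi 0) := by
  refine Integrable.of_integral_ne_zero ?_
  rw [Real.integral_rpow_mul_exp_neg_mul_Ioi hb hr]
  have := Real.Gamma_pos_of_pos hb
  positivity

theorem continuousOn_lapW_integrand (a b x : ℝ) :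
    ContinuousOn (fun s : ℝ => s ^ (b - 1) * (1 + s) ^ (a - 1) * Real.exp (-(x * s))) (Ioi 0) := by
  intro s hs
  have hs : 0 < s := hs
  refine ContinuousAt.continuousWithinAt ?_
  refine ((Real.continuousAt_rpow_const s _ (Or.inl hs.ne')).mul ?_).mul (by fun_prop)
  exact ContinuousAt.rpow_const (by fun_prop) (Or.inl (by positivity))

theorem aesm_lapW (a b x : ℝ) : AEStronglyMeasurable
    (fun s : ℝ => s ^ (b - 1) * (1 + s) ^ (a - 1) * Real.exp (-(x * s)))
    (volume.restrict (Ioi 0)) :=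
  (continuousOn_lapW_integrand a b x).aestronglyMeasurable measurableSet_Ioi

/-- Powers of `1 + s`, whatever their sign, are absorbed by an exponential of small rate. -/
theorem exists_one_add_rpow_le (p : ℝ) {δ : ℝ} (hδ : 0 < δ) :
    ∃ C : ℝ, ∀ s : ℝ, 0 < s → (1 + s) ^ p ≤ C * Real.exp (δ * s) := by
  -- `1 + s ≤ e^(εs) / ε`, and the rate `ε |p|` of the power of the right side is at most `δ`
  set ε := min 1 (δ / (|p| + 1))
  have hε : 0 < ε := by positivity
  have hε1 : ε ≤ 1 := min_le_left _ _
  have hεp : ε * |p| ≤ δ := by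
    have h1 : ε ≤ δ / (|p| + 1) := min_le_right _ _
    rw [le_div_iff₀ (by positivity)] at h1
    nlinarith [abs_nonneg p]
  refine ⟨(ε ^ |p|)⁻¹, fun s hs => ?_⟩
  have h1 : 1 + s ≤ Real.exp (ε * s) / ε := by
    rw [le_div_iff₀ hε]
    nlinarith [Real.add_one_le_exp (ε * s)]
  calc (1 + s) ^ p ≤ (1 + s) ^ |p| := Real.rpow_le_rpow_of_exponent_le (by linarith) (le_abs_self p)
    _ ≤ (Real.exp (ε * s) / ε) ^ |p| := Real.rpow_le_rpow (by linarith) h1 (abs_nonneg p)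
    _ = (ε ^ |p|)⁻¹ * Real.exp (ε * |p| * s) := by
      rw [Real.div_rpow (Real.exp_pos _).le hε.le, ← Real.exp_mul, div_eq_inv_mul]
      congr 2
      ring
    _ ≤ (ε ^ |p|)⁻¹ * Real.exp (δ * s) := by gcongr

theorem integrableOn_lapW (a : ℝ) {b x : ℝ} (hb : 0 < b) (hx : 0 < x) :
    IntegrableOn (fun s : ℝ => s ^ (b - 1) * (1 + s) ^ (a - 1) * Real.exp (-(x * s))) (Ioi 0) := by
  obtain ⟨C, hC⟩ := exists_one_add_rpow_le (a - 1) (half_pos hx)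
  refine Integrable.mono' ((integrableOn_gamma hb (half_pos hx)).const_mul C) (aesm_lapW a b x) ?_
  refine (ae_restrict_iff' measurableSet_Ioi).mpr (ae_of_all _ fun s hs => ?_)
  have hs : 0 < s := hs
  rw [Real.norm_eq_abs, abs_of_nonneg (by positivity)]
  calc s ^ (b - 1) * (1 + s) ^ (a - 1) * Real.exp (-(x * s))
      ≤ s ^ (b - 1) * (C * Real.exp (x / 2 * s)) * Real.exp (-(x * s)) := by
        gcongr
        exact hC s hs
    _ = C * (s ^ (b - 1) * Real.exp (-(x / 2 * s))) := by
        have : Real.exp (-(x / 2 * s)) = Real.exp (x / 2 * s) * Real.exp (-(x * s)) := by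
          rw [← Real.exp_add]; congr 1; ring
        rw [this]; ring

theorem hasDerivAt_lapW (a : ℝ) {b x : ℝ} (hb : 0 < b) (hx : 0 < x) :
    HasDerivAt (lapW a b) (-lapW a (b + 1) x) x := by
  have key := hasDerivAt_integral_of_dominated_loc_of_deriv_le
    (μ := volume.restrict (Ioi (0 : ℝ)))
    (F := fun y s => s ^ (b - 1) * (1 + s) ^ (a - 1) * Real.exp (-(y * s)))
    (F' := fun y s => -(s ^ (b + 1 - 1) * (1 + s) ^ (a - 1) * Real.exp (-(y * s))))
    (bound := fun s => s ^ (b + 1 - 1) * (1 + s) ^ (a - 1) * Real.exp (-(x / 2 * s)))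
    (x₀ := x) (Ioi_mem_nhds (half_lt_self hx))
    (Eventually.of_forall fun y => aesm_lapW a b y) (integrableOn_lapW a hb hx)
    (aesm_lapW a (b + 1) x).neg ?_ (integrableOn_lapW a (by linarith) (half_pos hx)) ?_
  · have h := key.2
    rw [MeasureTheory.integral_neg] at h
    exact h
  · refine (ae_restrict_iff' measurableSet_Ioi).mpr (ae_of_all _ fun s hs y hy => ?_)
    have hs : 0 < s := hs
    have hy : x / 2 < y := hy
    rw [norm_neg, Real.norm_eq_abs, abs_of_nonneg (by positivity)]
    gcongr
  · refine (ae_restrict_iff' measurableSet_Ioi).mpr (ae_of_all _ fun s hs y _ => ?_)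
    have hs : 0 < s := hs
    have h1 : HasDerivAt (fun y : ℝ => Real.exp (-(y * s))) (Real.exp (-(y * s)) * -(1 * s)) y :=
      ((hasDerivAt_id y).mul_const s).neg.exp
    refine (h1.const_mul (s ^ (b - 1) * (1 + s) ^ (a - 1))).congr_deriv ?_
    rw [show b + 1 - 1 = b - 1 + 1 by ring, Real.rpow_add_one hs.ne']
    ring

theorem lapW_succ (a : ℝ) {b x : ℝ} (hb : 0 < b) (hx : 0 < x) :
    lapW (a + 1) b x = lapW a b x + lapW a (b + 1) x := by
  rw [lapW, lapW, lapW, ← MeasureTheory.integral_add (integrableOn_lapW a hb hx)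
    (integrableOn_lapW a (by linarith) hx)]
  refine setIntegral_congr_fun measurableSet_Ioi fun s hs => ?_
  have hs : 0 < s := hs
  rw [show b + 1 - 1 = b - 1 + 1 by ring, Real.rpow_add_one hs.ne',
    show a + 1 - 1 = a - 1 + 1 by ring, Real.rpow_add_one (by positivity)]
  ring

/-- Integration of the derivative of `s^b (1+s)^a e^(-xs)`. -/
theorem lapW_ibp (a : ℝ) {b x : ℝ} (hb : 0 < b) (hx : 0 < x) :
    b * lapW (a + 1) b x + a * lapW a (b + 1) x - x * lapW (a + 1) (b + 1) x = 0 := by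
  have i1 := (integrableOn_lapW (a + 1) hb hx).const_mul b
  have i2 := (integrableOn_lapW a (b := b + 1) (by linarith) hx).const_mul a
  have i3 := (integrableOn_lapW (a + 1) (b := b + 1) (by linarith) hx).const_mul x
  obtain ⟨C, hC⟩ := exists_one_add_rpow_le a (half_pos hx)
  have key := integral_Ioi_of_hasDerivAt_of_tendsto (a := 0) (m := 0)
    (f := fun s : ℝ => s ^ b * (1 + s) ^ a * Real.exp (-(x * s))) ?_ ?_ ((i1.add i2).sub i3) ?_
  · have h0 : (0 : ℝ) ^ b = 0 := Real.zero_rpow hb.ne'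
    simp only [h0, zero_mul, sub_zero] at key
    rw [lapW, lapW, lapW, ← MeasureTheory.integral_const_mul, ← MeasureTheory.integral_const_mul,
      ← MeasureTheory.integral_const_mul, ← MeasureTheory.integral_add i1 i2]
    exact (MeasureTheory.integral_sub (i1.add i2) i3).symm.trans key
  · refine ContinuousAt.continuousWithinAt ?_
    refine ((Real.continuousAt_rpow_const 0 _ (Or.inr hb.le)).mul ?_).mul (by fun_prop)
    exact ContinuousAt.rpow_const (by fun_prop) (Or.inl (by norm_num))
  · intro s hs
    have hs : 0 < s := hs
    have h1 : HasDerivAt (fun s : ℝ => s ^ b) (b * s ^ (b - 1)) s :=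
      Real.hasDerivAt_rpow_const (Or.inl hs.ne')
    have h2 : HasDerivAt (fun s : ℝ => (1 + s) ^ a) (1 * a * (1 + s) ^ (a - 1)) s :=
      ((hasDerivAt_id s).const_add 1).rpow_const (Or.inl (by simp; positivity))
    have h3 : HasDerivAt (fun s : ℝ => Real.exp (-(x * s))) (Real.exp (-(x * s)) * -(x * 1)) s :=
      ((hasDerivAt_id s).const_mul x).neg.exp
    refine ((h1.mul h2).mul h3).congr_deriv ?_
    simp only [Pi.add_apply, Pi.sub_apply, Pi.mul_apply]
    rw [show b + 1 - 1 = b by ring, show a + 1 - 1 = a by ring]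
    ring
  · have h1 : Tendsto (fun s : ℝ => C * (s ^ b * Real.exp (-(x / 2) * s))) atTop (𝓝 0) := by
      simpa using (tendsto_rpow_mul_exp_neg_mul_atTop_nhds_zero b (x / 2) (half_pos hx)).const_mul C
    refine squeeze_zero' ?_ ?_ h1
    · filter_upwards [eventually_gt_atTop 0] with s hs
      positivity
    · filter_upwards [eventually_gt_atTop 0] with s hs
      calc s ^ b * (1 + s) ^ a * Real.exp (-(x * s))
          ≤ s ^ b * (C * Real.exp (x / 2 * s)) * Real.exp (-(x * s)) := by
            gcongr
            exact hC s hs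
        _ = C * (s ^ b * Real.exp (-(x / 2) * s)) := by
            have : Real.exp (-(x / 2) * s) = Real.exp (x / 2 * s) * Real.exp (-(x * s)) := by
              rw [← Real.exp_add]; congr 1; ring
            rw [this]; ring

/-- Kummer's differential equation for `lapW`, written through `hasDerivAt_lapW`. -/
theorem lapW_three (a : ℝ) {b x : ℝ} (hb : 0 < b) (hx : 0 < x) :
    b * lapW a b x + (a + b - x) * lapW a (b + 1) x - x * lapW a (b + 2) x = 0 := by
  have h := lapW_ibp a hb hx
  rw [lapW_succ a hb hx, lapW_succ a (b := b + 1) (by linarith) hx,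
    show b + 1 + 1 = b + 2 by ring] at h
  linarith

/-- Euler's beta integral on the half-line, by the substitution `s = t / (1 - t)`. -/
theorem integral_beta_Ioi {a b : ℝ} (hb : 0 < b) (hab : a + b < 1) :
    ∫ s in Ioi (0 : ℝ), s ^ (b - 1) * (1 + s) ^ (a - 1)
      = Real.Gamma b * Real.Gamma (1 - a - b) / Real.Gamma (1 - a) := by
  have himg : (fun t : ℝ => t / (1 - t)) '' Ioo 0 1 = Ioi 0 := by
    ext s
    constructor
    · rintro ⟨t, ⟨h0, h1⟩, rfl⟩
      exact div_pos h0 (by linarith)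
    · intro hs
      have hs : 0 < s := hs
      refine ⟨s / (1 + s), ⟨by positivity, ?_⟩, ?_⟩
      · rw [div_lt_one (by positivity)]; linarith
      · field_simp
        ring
  have hcov := integral_image_eq_integral_abs_deriv_smul (s := Ioo (0 : ℝ) 1)
    (f := fun t : ℝ => t / (1 - t)) (f' := fun t => 1 / (1 - t) ^ 2) measurableSet_Ioo
    (fun t ht => by
      have h1 : 1 - t ≠ 0 := by have := ht.2; linarith
      refine HasDerivAt.hasDerivWithinAt ?_
      refine ((hasDerivAt_id t).div ((hasDerivAt_id t).const_sub 1) h1).congr_deriv ?_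
      simp)
    (fun t ht u hu h => by
      have h1 : 1 - t ≠ 0 := by have := ht.2; linarith
      have h2 : 1 - u ≠ 0 := by have := hu.2; linarith
      rw [div_eq_div_iff h1 h2] at h
      linarith)
    (fun s => s ^ (b - 1) * (1 + s) ^ (a - 1))
  rw [himg] at hcov
  rw [hcov]
  have hbeta := ProbabilityTheory.beta_eq_betaIntegralReal b (1 - a - b) hb (by linarith)
  rw [ProbabilityTheory.beta, show b + (1 - a - b) = 1 - a by ring] at hbeta
  rw [hbeta, Complex.betaIntegral, intervalIntegral.integral_of_le zero_le_one,
    integral_Ioc_eq_integral_Ioo]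
  have : ∀ t ∈ Ioo (0 : ℝ) 1, (t : ℂ) ^ ((b : ℂ) - 1) * (1 - (t : ℂ)) ^ (((1 - a - b : ℝ) : ℂ) - 1)
      = ((|1 / (1 - t) ^ 2| • ((t / (1 - t)) ^ (b - 1) * (1 + t / (1 - t)) ^ (a - 1)) : ℝ) : ℂ) := by
    intro t ht
    have h0 : 0 < t := ht.1
    have h1 : 0 < 1 - t := by have := ht.2; linarith
    have e1 : 1 + t / (1 - t) = (1 - t)⁻¹ := by field_simp; ring
    have e2 : 1 / (1 - t) ^ 2 = (1 - t) ^ (-2 : ℝ) := by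
      rw [Real.rpow_neg h1.le, Real.rpow_two, one_div]
    rw [e1, abs_of_nonneg (by positivity), smul_eq_mul, e2, Real.div_rpow h0.le h1.le,
      Real.inv_rpow h1.le, div_eq_mul_inv, ← Real.rpow_neg h1.le, ← Real.rpow_neg h1.le]
    have e3 : (1 - t) ^ (-2 : ℝ) * (t ^ (b - 1) * (1 - t) ^ (-(b - 1)) * (1 - t) ^ (-(a - 1)))
        = t ^ (b - 1) * (1 - t) ^ (1 - a - b - 1) := by
      rw [show 1 - a - b - 1 = -2 + (-(b - 1)) + (-(a - 1)) by ring, Real.rpow_add h1,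
        Real.rpow_add h1]
      ring
    rw [e3]
    push_cast
    rw [Complex.ofReal_cpow h0.le, Complex.ofReal_cpow h1.le]
    push_cast
    rfl
  rw [setIntegral_congr_fun measurableSet_Ioo this, integral_complex_ofReal]
  exact (Complex.ofReal_re _).symm

theorem tendsto_lapW {a b : ℝ} (hb : 0 < b) (hab : a + b < 1) :
    Tendsto (lapW a b) (𝓝[>] 0)
      (𝓝 (Real.Gamma b * Real.Gamma (1 - a - b) / Real.Gamma (1 - a))) := by
  have hG1 := Real.Gamma_pos_of_pos hb
  have hG2 := Real.Gamma_pos_of_pos (show 0 < 1 - a - b by linarith)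
  have hG3 := Real.Gamma_pos_of_pos (show 0 < 1 - a by linarith)
  have hval := integral_beta_Ioi hb hab
  rw [← hval]
  refine tendsto_integral_filter_of_dominated_convergence
    (fun s => s ^ (b - 1) * (1 + s) ^ (a - 1)) (Eventually.of_forall fun x => aesm_lapW a b x)
    ?_ (.of_integral_ne_zero (by rw [hval]; positivity)) ?_
  · filter_upwards [self_mem_nhdsWithin] with x hx
    have hx : 0 < x := hx
    refine (ae_restrict_iff' measurableSet_Ioi).mpr (ae_of_all _ fun s hs => ?_)
    have hs : 0 < s := hs
    rw [Real.norm_eq_abs, abs_of_nonneg (by positivity)]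
    refine mul_le_of_le_one_right (by positivity) (Real.exp_le_one_iff.mpr ?_)
    have := mul_pos hx hs
    linarith
  · refine ae_of_all _ fun s => ?_
    have : Continuous fun x : ℝ => s ^ (b - 1) * (1 + s) ^ (a - 1) * Real.exp (-(x * s)) := by
      fun_prop
    refine tendsto_nhdsWithin_of_tendsto_nhds ?_
    simpa using this.tendsto 0

/-- The substitution `s = u / x`. -/
theorem rpow_mul_lapW {a b x : ℝ} (hx : 0 < x) :
    x ^ (a + b - 1) * lapW a b x
      = ∫ u in Ioi (0 : ℝ), u ^ (b - 1) * (x + u) ^ (a - 1) * Real.exp (-u) := by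
  have h := integral_comp_mul_left_Ioi
    (fun u : ℝ => u ^ (b - 1) * (x + u) ^ (a - 1) * Real.exp (-u)) 0 hx
  rw [mul_zero, smul_eq_mul] at h
  rw [lapW, ← MeasureTheory.integral_const_mul]
  have h' : ∫ u in Ioi (0 : ℝ), u ^ (b - 1) * (x + u) ^ (a - 1) * Real.exp (-u)
      = x * ∫ s in Ioi (0 : ℝ), (x * s) ^ (b - 1) * (x + x * s) ^ (a - 1) * Real.exp (-(x * s)) := by
    rw [h]
    field_simp
  rw [h', ← MeasureTheory.integral_const_mul]
  refine setIntegral_congr_fun measurableSet_Ioi fun s hs => ?_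
  have hs : 0 < s := hs
  rw [show x + x * s = x * (1 + s) by ring, Real.mul_rpow hx.le hs.le,
    Real.mul_rpow hx.le (by positivity), show a + b - 1 = 1 + (b - 1) + (a - 1) by ring,
    Real.rpow_add hx, Real.rpow_add hx, Real.rpow_one]
  ring

/-- The behaviour at `0⁺` of the derivative `-lapW a (b + 1)` of `lapW a b`. -/
theorem tendsto_rpow_mul_lapW {a b : ℝ} (hb : 0 < b) (hab0 : 0 < a + b) (hab : a + b < 1) :
    Tendsto (fun x => x ^ (a + b) * lapW a (b + 1) x) (𝓝[>] 0) (𝓝 (Real.Gamma (a + b))) := by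
  have hev : (fun x => ∫ u in Ioi (0 : ℝ), u ^ b * (x + u) ^ (a - 1) * Real.exp (-u))
      =ᶠ[𝓝[>] 0] fun x => x ^ (a + b) * lapW a (b + 1) x := by
    filter_upwards [self_mem_nhdsWithin] with x hx
    have h := rpow_mul_lapW (a := a) (b := b + 1) (x := x) hx
    rw [show a + (b + 1) - 1 = a + b by ring, show b + 1 - 1 = b by ring] at h
    exact h.symm
  refine Tendsto.congr' hev ?_
  rw [Real.Gamma_eq_integral hab0]
  have hpow : ∀ u : ℝ, 0 < u → u ^ b * u ^ (a - 1) = u ^ (a + b - 1) := fun u hu => by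
    rw [← Real.rpow_add hu]; congr 1; ring
  refine tendsto_integral_filter_of_dominated_convergence
    (fun u => Real.exp (-u) * u ^ (a + b - 1)) ?_ ?_ (Real.GammaIntegral_convergent hab0) ?_
  · filter_upwards [self_mem_nhdsWithin] with x hx
    have hx : 0 < x := hx
    refine ContinuousOn.aestronglyMeasurable (fun u hu => ?_) measurableSet_Ioi
    have hu : 0 < u := hu
    refine ContinuousAt.continuousWithinAt ?_
    refine ((Real.continuousAt_rpow_const u _ (Or.inl hu.ne')).mul ?_).mul (by fun_prop)
    exact ContinuousAt.rpow_const (by fun_prop) (Or.inl (by positivity))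
  · filter_upwards [self_mem_nhdsWithin] with x hx
    have hx : 0 < x := hx
    refine (ae_restrict_iff' measurableSet_Ioi).mpr (ae_of_all _ fun u hu => ?_)
    have hu : 0 < u := hu
    rw [Real.norm_eq_abs, abs_of_nonneg (by positivity), ← hpow u hu, mul_comm (Real.exp _)]
    have : (x + u) ^ (a - 1) ≤ u ^ (a - 1) :=
      Real.rpow_le_rpow_of_nonpos hu (by linarith) (by linarith)
    gcongr
  · refine (ae_restrict_iff' measurableSet_Ioi).mpr (ae_of_all _ fun u hu => ?_)
    have hu : 0 < u := hu
    rw [← hpow u hu, mul_comm (Real.exp _)]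
    refine tendsto_nhdsWithin_of_tendsto_nhds ?_
    have h1 : ContinuousAt (fun x : ℝ => u ^ b * (x + u) ^ (a - 1) * Real.exp (-u)) 0 := by
      refine (continuousAt_const.mul ?_).mul continuousAt_const
      exact ContinuousAt.rpow_const (by fun_prop) (Or.inl (by simpa using hu.ne'))
    simpa [ContinuousAt] using h1

/-! ### The connection formula -/

/-- The combination of the two Kummer solutions to which `lapW a b` is proportional. Reciprocals of
`Γ` at poles vanish, so all `a` and `b` are allowed. -/
noncomputable def kummerT (a b x : ℝ) : ℝ :=
  x ^ (1 - a - b) * regM (1 - a) (2 - a - b) x * (Real.Gamma b)⁻¹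
    - regM b (a + b) x * (Real.Gamma (1 - a))⁻¹

theorem regM_lower_c (a c x : ℝ) :
    regM a c x = c * regM a (c + 1) x + x * (a * regM (a + 1) (c + 2) x) := by
  have h1 := regM_contig_c a c x
  have h2 := regM_contig_a a (c + 1) x
  rw [show c + 1 + 1 = c + 2 by ring] at h2
  linear_combination h1 + a * h2

theorem hasDerivAt_kummerT (a b : ℝ) {x : ℝ} (hx : 0 < x) :
    HasDerivAt (kummerT a b) (b * kummerT a (b + 1) x) x := by
  have h1 : HasDerivAt (fun x : ℝ => x ^ (1 - a - b)) ((1 - a - b) * x ^ (1 - a - b - 1)) x :=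
    Real.hasDerivAt_rpow_const (Or.inl hx.ne')
  refine (((h1.mul (hasDerivAt_regM (1 - a) (2 - a - b) x)).mul_const _).sub
    ((hasDerivAt_regM b (a + b) x).mul_const _)).congr_deriv ?_
  have h2 := regM_lower_c (1 - a) (1 - a - b) x
  rw [show 1 - a - b + 1 = 2 - a - b by ring, show 1 - a - b + 2 = 2 - a - b + 1 by ring] at h2
  have h3 : x ^ (1 - a - b) = x ^ (1 - a - b - 1) * x := by
    rw [← Real.rpow_add_one hx.ne']; congr 1; ring
  rw [kummerT, show 1 - a - (b + 1) = 1 - a - b - 1 by ring,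
    show 2 - a - (b + 1) = 1 - a - b by ring, show a + (b + 1) = a + b + 1 by ring, h2, h3,
    inv_Gamma_eq b]
  ring

theorem kummerT_succ (a b : ℝ) {x : ℝ} (hx : 0 < x) :
    kummerT a b x + kummerT (a + 1) b x = b * kummerT a (b + 1) x := by
  have h1 := regM_contig_a (-a) (1 - a - b) x
  rw [show -a + 1 = 1 - a by ring, show 1 - a - b + 1 = 2 - a - b by ring] at h1
  have h2 := regM_contig_c b (a + b) x
  have h3 : x ^ (1 - a - b) = x ^ (1 - a - b - 1) * x := by
    rw [← Real.rpow_add_one hx.ne']; congr 1; ring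
  have h4 := inv_Gamma_eq (-a)
  rw [show -a + 1 = 1 - a by ring] at h4
  rw [kummerT, kummerT, kummerT, show 1 - a - (b + 1) = 1 - a - b - 1 by ring,
    show 2 - a - (b + 1) = 1 - a - b by ring, show a + (b + 1) = a + b + 1 by ring,
    show 1 - (a + 1) - b = 1 - a - b - 1 by ring, show 1 - (a + 1) = -a by ring,
    show 2 - (a + 1) - b = 1 - a - b by ring, show a + 1 + b = a + b + 1 by ring, h3,
    inv_Gamma_eq b, h4]
  linear_combination (-x ^ (1 - a - b - 1) * b * (Real.Gamma (b + 1))⁻¹) * h1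
    - (Real.Gamma (1 - a))⁻¹ * h2

theorem regM_three_c (a c x : ℝ) :
    regM a c x = (c + x) * regM a (c + 1) x + x * (a - c - 1) * regM a (c + 2) x := by
  have h1 := regM_lower_c a c x
  have h2 := regM_contig_c a (c + 1) x
  rw [show c + 1 + 1 = c + 2 by ring] at h2
  linear_combination h1 - x * h2

/-- Kummer's differential equation for `regM b c`, written through `hasDerivAt_regM`. -/
theorem regM_three (b c x : ℝ) :
    regM b c x = (c - x) * regM (b + 1) (c + 1) x + x * ((b + 1) * regM (b + 2) (c + 2) x) := by
  have h1 := regM_lower_c (b + 1) c x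
  rw [show b + 1 + 1 = b + 2 by ring] at h1
  have h2 := regM_contig_a b c x
  linear_combination h1 - h2

/-- Kummer's differential equation for `kummerT`, written through `hasDerivAt_kummerT`. -/
theorem kummerT_three (a b : ℝ) {x : ℝ} (hx : 0 < x) :
    kummerT a b x - (a + b - x) * kummerT a (b + 1) x
      - x * ((b + 1) * kummerT a (b + 2) x) = 0 := by
  have h1 := regM_three_c (1 - a) (-a - b) x
  rw [show -a - b + 1 = 1 - a - b by ring, show -a - b + 2 = 2 - a - b by ring] at h1
  have h2 := regM_three b (a + b) x
  have h3 : x ^ (1 - a - b) = x ^ (1 - a - b - 2) * x * x := by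
    rw [mul_assoc, ← sq, ← Real.rpow_two, ← Real.rpow_add hx]; congr 1; ring
  have h3' : x ^ (1 - a - b - 1) = x ^ (1 - a - b - 2) * x := by
    rw [← Real.rpow_add_one hx.ne']; congr 1; ring
  have h4 := inv_Gamma_eq (b + 1)
  rw [show b + 1 + 1 = b + 2 by ring] at h4
  rw [kummerT, kummerT, kummerT, show 1 - a - (b + 1) = 1 - a - b - 1 by ring,
    show 2 - a - (b + 1) = 1 - a - b by ring, show a + (b + 1) = a + b + 1 by ring,
    show 1 - a - (b + 2) = 1 - a - b - 2 by ring,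
    show 2 - a - (b + 2) = -a - b by ring, show a + (b + 2) = a + b + 2 by ring, h3, h3',
    inv_Gamma_eq b, h4]
  linear_combination (-(x ^ (1 - a - b - 2)) * x * (b + 1) * (Real.Gamma (b + 2))⁻¹) * h1
    - (Real.Gamma (1 - a))⁻¹ * h2

theorem tendsto_rpow_zero {p : ℝ} (hp : 0 < p) :
    Tendsto (fun x : ℝ => x ^ p) (𝓝[>] 0) (𝓝 0) := by
  have h := (Real.continuousAt_rpow_const 0 p (Or.inr hp.le)).tendsto
  rw [Real.zero_rpow hp.ne'] at h
  exact tendsto_nhdsWithin_of_tendsto_nhds h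

theorem tendsto_regM (a c : ℝ) : Tendsto (regM a c) (𝓝[>] 0) (𝓝 (Real.Gamma c)⁻¹) := by
  have h := (continuous_regM a c).tendsto 0
  rw [regM_zero] at h
  exact tendsto_nhdsWithin_of_tendsto_nhds h

theorem tendsto_kummerT {a b : ℝ} (hab : a + b < 1) :
    Tendsto (kummerT a b) (𝓝[>] 0) (𝓝 (-((Real.Gamma (a + b))⁻¹ * (Real.Gamma (1 - a))⁻¹))) := by
  have h := (((tendsto_rpow_zero (show 0 < 1 - a - b by linarith)).mul
    (tendsto_regM (1 - a) (2 - a - b))).mul_const (Real.Gamma b)⁻¹).sub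
    ((tendsto_regM b (a + b)).mul_const (Real.Gamma (1 - a))⁻¹)
  simp only [zero_mul, zero_sub] at h
  exact h

theorem tendsto_rpow_mul_kummerT {a b : ℝ} (hab : 0 < a + b) :
    Tendsto (fun x => x ^ (a + b) * kummerT a (b + 1) x) (𝓝[>] 0)
      (𝓝 ((Real.Gamma (1 - a - b))⁻¹ * (Real.Gamma (b + 1))⁻¹)) := by
  have h := ((tendsto_regM (1 - a) (1 - a - b)).mul_const (Real.Gamma (b + 1))⁻¹).sub
    ((tendsto_rpow_zero hab).mul ((tendsto_regM (b + 1) (a + b + 1)).mul_const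
      (Real.Gamma (1 - a))⁻¹))
  rw [zero_mul, sub_zero] at h
  refine h.congr' ?_
  filter_upwards [self_mem_nhdsWithin] with x hx
  have hx : 0 < x := hx
  have h1 : x ^ (a + b) * x ^ (-(a + b)) = 1 := by
    rw [← Real.rpow_add hx]; simp
  rw [kummerT, show 1 - a - (b + 1) = -(a + b) by ring,
    show 2 - a - (b + 1) = 1 - a - b by ring, show a + (b + 1) = a + b + 1 by ring]
  linear_combination (-(regM (1 - a) (1 - a - b) x * (Real.Gamma (b + 1))⁻¹)) * h1

/-- A function with zero derivative on `(0, ∞)` and limit `0` at `0⁺` vanishes. -/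
theorem eq_zero_of_deriv_zero {f : ℝ → ℝ} (hf : ∀ x, 0 < x → HasDerivAt f 0 x)
    (h0 : Tendsto f (𝓝[>] 0) (𝓝 0)) {x : ℝ} (hx : 0 < x) : f x = 0 := by
  have hconst : ∀ y ∈ Ioi (0 : ℝ), f y = f x := fun y hy =>
    isOpen_Ioi.is_const_of_deriv_eq_zero isPreconnected_Ioi
      (fun z hz => (hf z hz).differentiableAt.differentiableWithinAt)
      (fun z hz => (hf z hz).deriv) hy hx
  refine tendsto_nhds_unique (Tendsto.congr' ?_ tendsto_const_nhds) h0
  filter_upwards [self_mem_nhdsWithin] with y hy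
  exact (hconst y hy).symm

/-- Uniqueness for Kummer's equation with `b, c > 0`: a solution `D₀` with `D₀ → 0` and
`x^c D₀' → 0` at `0⁺` vanishes. Abel's formula makes `x^c e^(-x)` times its Wronskian with the
positive solution `regM b c` constant, hence zero, so the quotient of the two is constant. -/
theorem kummer_unique {b c : ℝ} (hb : 0 < b) (hc : 0 < c) {D₀ D₁ D₂ : ℝ → ℝ}
    (h₀ : ∀ x, 0 < x → HasDerivAt D₀ (-D₁ x) x) (h₁ : ∀ x, 0 < x → HasDerivAt D₁ (-D₂ x) x)
    (hode : ∀ x, 0 < x → b * D₀ x + (c - x) * D₁ x - x * D₂ x = 0)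
    (l₀ : Tendsto D₀ (𝓝[>] 0) (𝓝 0)) (l₁ : Tendsto (fun x => x ^ c * D₁ x) (𝓝[>] 0) (𝓝 0))
    {x : ℝ} (hx : 0 < x) : D₀ x = 0 := by
  have hW : ∀ y, 0 < y → y ^ c * Real.exp (-y) *
      (D₁ y * regM b c y + b * regM (b + 1) (c + 1) y * D₀ y) = 0 := by
    intro y hy
    refine eq_zero_of_deriv_zero (f := fun y => y ^ c * Real.exp (-y) *
      (D₁ y * regM b c y + b * regM (b + 1) (c + 1) y * D₀ y)) (fun z hz => ?_) ?_ hy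
    · have e1 : HasDerivAt (fun z : ℝ => z ^ c) (c * z ^ (c - 1)) z :=
        Real.hasDerivAt_rpow_const (Or.inl hz.ne')
      have e2 : HasDerivAt (fun z : ℝ => Real.exp (-z)) (Real.exp (-z) * -1) z :=
        (hasDerivAt_id z).neg.exp
      have e3 := hasDerivAt_regM b c z
      have e4 := (hasDerivAt_regM (b + 1) (c + 1) z).const_mul b
      refine ((e1.mul e2).mul (((h₁ z hz).mul e3).add (e4.mul (h₀ z hz)))).congr_deriv ?_
      have e5 : z ^ c = z ^ (c - 1) * z := by
        rw [← Real.rpow_add_one hz.ne']; congr 1; ring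
      have e6 := regM_three b c z
      have e7 := hode z hz
      simp only [Pi.mul_apply, Pi.add_apply]
      rw [e5, show b + 1 + 1 = b + 2 by ring, show c + 1 + 1 = c + 2 by ring]
      linear_combination (z ^ (c - 1) * Real.exp (-z) * regM b c z) * e7
        - (z ^ (c - 1) * Real.exp (-z) * b * D₀ z) * e6
    · have t1 : Tendsto (fun y : ℝ => Real.exp (-y)) (𝓝[>] 0) (𝓝 (Real.exp (-0))) :=
        tendsto_nhdsWithin_of_tendsto_nhds (by
          have : Continuous fun y : ℝ => Real.exp (-y) := by fun_prop
          exact this.tendsto 0)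
      have t2 := t1.mul ((l₁.mul (tendsto_regM b c)).add
        ((((tendsto_regM (b + 1) (c + 1)).const_mul b).mul l₀).mul (tendsto_rpow_zero hc)))
      simp only [zero_mul, mul_zero, add_zero] at t2
      refine t2.congr fun y => ?_
      ring
  have hpos : ∀ y, 0 < y → 0 < regM b c y := fun y hy => regM_pos hb hc hy.le
  have hq := eq_zero_of_deriv_zero (f := fun y => D₀ y / regM b c y) (fun z hz => ?_) ?_ hx
  · exact (div_eq_zero_iff.mp hq).resolve_right (hpos x hx).ne'
  · refine ((h₀ z hz).div (hasDerivAt_regM b c z) (hpos z hz).ne').congr_deriv ?_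
    have h := hW z hz
    have hne : z ^ c * Real.exp (-z) ≠ 0 := by positivity
    have h' := (mul_eq_zero.mp h).resolve_left hne
    rw [div_eq_zero_iff]
    left
    linear_combination -h'
  · have h := l₀.div (tendsto_regM b c) (inv_ne_zero (Real.Gamma_pos_of_pos hc).ne')
    rwa [zero_div] at h

theorem pi_div_sin_shift (c : ℝ) :
    Real.pi / Real.sin (Real.pi * (c + 1 - 1)) = -(Real.pi / Real.sin (Real.pi * (c - 1))) := by
  rw [show Real.pi * (c + 1 - 1) = Real.pi * (c - 1) + Real.pi by ring, Real.sin_add_pi, div_neg]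

/-- The connection formula for Tricomi's function, in the range where both constants can be read
off from the behaviour at `0⁺`. -/
theorem connection_base {a b : ℝ} (hb : 0 < b) (h0 : 0 < a + b) (h1 : a + b < 1) {x : ℝ}
    (hx : 0 < x) :
    lapW a b x = Real.Gamma b * (Real.pi / Real.sin (Real.pi * (a + b - 1))) * kummerT a b x := by
  -- `D₁` and `D₂` are the successive derivatives, up to sign, of the difference `D₀`
  set κ := Real.pi / Real.sin (Real.pi * (a + b - 1)) with hκ
  have hrefl : κ = -(Real.Gamma (a + b) * Real.Gamma (1 - a - b)) := by
    rw [show 1 - a - b = 1 - (a + b) by ring, Real.Gamma_mul_Gamma_one_sub,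
      show Real.pi * (a + b) = Real.pi * (a + b + 1 - 1) by ring, pi_div_sin_shift, neg_neg]
  have g1 := (Real.Gamma_pos_of_pos hb).ne'
  have g2 := (Real.Gamma_pos_of_pos h0).ne'
  have g3 := (Real.Gamma_pos_of_pos (show 0 < 1 - a - b by linarith)).ne'
  have g4 := (Real.Gamma_pos_of_pos (show 0 < b + 1 by linarith)).ne'
  have hG := Real.Gamma_add_one hb.ne'
  have key := kummer_unique hb h0
    (D₀ := fun x => lapW a b x - Real.Gamma b * κ * kummerT a b x)
    (D₁ := fun x => lapW a (b + 1) x + Real.Gamma (b + 1) * κ * kummerT a (b + 1) x)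
    (D₂ := fun x => lapW a (b + 2) x - Real.Gamma (b + 1) * (b + 1) * κ * kummerT a (b + 2) x)
    (fun y hy => ?_) (fun y hy => ?_) (fun y hy => ?_) ?_ ?_ hx
  · linarith
  · refine ((hasDerivAt_lapW a hb hy).sub ((hasDerivAt_kummerT a b hy).const_mul _)).congr_deriv ?_
    rw [hG]
    ring
  · refine ((hasDerivAt_lapW a (b := b + 1) (by linarith) hy).add
      ((hasDerivAt_kummerT a (b + 1) hy).const_mul _)).congr_deriv ?_
    rw [show b + 1 + 1 = b + 2 by ring]
    ring
  · have e1 := lapW_three a hb hy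
    have e2 := kummerT_three a b hy
    rw [hG]
    linear_combination e1 - b * Real.Gamma b * κ * e2
  · have t := (tendsto_lapW hb h1).sub ((tendsto_kummerT h1).const_mul (Real.Gamma b * κ))
    convert t using 2
    rw [hrefl]
    field_simp
    ring
  · have t := (tendsto_rpow_mul_lapW hb h0 h1).add
      ((tendsto_rpow_mul_kummerT h0).const_mul (Real.Gamma (b + 1) * κ))
    have t0 : Real.Gamma (a + b) + Real.Gamma (b + 1) * κ *
        ((Real.Gamma (1 - a - b))⁻¹ * (Real.Gamma (b + 1))⁻¹) = 0 := by
      rw [hrefl]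
      field_simp
      ring
    rw [t0] at t
    refine t.congr fun y => ?_
    ring

/-- The connection formula for Tricomi's function. Differentiation in `x` raises `a + b` by one,
which reduces every non-integer `a + b > 0` to the range of `connection_base`. -/
theorem connection (n : ℕ) : ∀ {a b : ℝ}, 0 < b → (n : ℝ) < a + b → a + b < n + 1 →
    ∀ {x : ℝ}, 0 < x →
    lapW a b x = Real.Gamma b * (Real.pi / Real.sin (Real.pi * (a + b - 1))) * kummerT a b x := by
  induction n with
  | zero =>
    intro a b hb h0 h1 x hx
    exact connection_base hb (by simpa using h0) (by simpa using h1) hx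
  | succ n ih =>
    intro a b hb h0 h1 x hx
    push_cast at h0 h1
    have hG := Real.Gamma_add_one hb.ne'
    have ih' : ∀ {y : ℝ}, 0 < y → lapW (a - 1) b y =
        Real.Gamma b * (Real.pi / Real.sin (Real.pi * (a - 1 + b - 1))) * kummerT (a - 1) b y :=
      fun hy => ih hb (by linarith) (by linarith) hy
    have hd1 := hasDerivAt_lapW (a - 1) hb hx
    have hd2 := (hasDerivAt_kummerT (a - 1) b hx).const_mul
      (Real.Gamma b * (Real.pi / Real.sin (Real.pi * (a - 1 + b - 1))))
    have hd3 := hd1.congr_of_eventuallyEq (f₁ := fun y => Real.Gamma b *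
      (Real.pi / Real.sin (Real.pi * (a - 1 + b - 1))) * kummerT (a - 1) b y) (by
        filter_upwards [Ioi_mem_nhds hx] with y hy
        exact (ih' hy).symm)
    have hd := hd3.unique hd2
    have hs := lapW_succ (a - 1) hb hx
    have hk := kummerT_succ (a - 1) b hx
    rw [sub_add_cancel] at hs hk
    have hπ := pi_div_sin_shift (a - 1 + b)
    rw [show a - 1 + b + 1 - 1 = a + b - 1 by ring] at hπ
    rw [hs, ih' hx, hπ]
    linear_combination -hd + Real.Gamma b *
      (Real.pi / Real.sin (Real.pi * (a - 1 + b - 1))) * hk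

/-! ### Fourier inversion for differences of gamma variables -/

/-- The density of the gamma distribution of shape `a` and rate `1`, with complex values. -/
noncomputable def gammaDens (a : ℝ) : ℝ → ℂ :=
  indicator (Ioi 0) fun v => ((v ^ (a - 1) * Real.exp (-v) / Real.Gamma a : ℝ) : ℂ)

theorem integrable_gammaDens {a : ℝ} (ha : 0 < a) : Integrable (gammaDens a) := by
  refine (integrable_indicator_iff measurableSet_Ioi).mpr ?_
  have h := ((integrableOn_gamma ha one_pos).div_const (Real.Gamma a)).ofReal (𝕜 := ℂ)
  simp only [one_mul] at h
  exact h

/-- The integrand of `∫₀^∞ v^(a-1) e^(-v) e^(-itv) dv`. -/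
noncomputable def gammaKer (a t v : ℝ) : ℂ :=
  ((v ^ (a - 1) * Real.exp (-v) : ℝ) : ℂ) * Complex.exp (((-(t * v) : ℝ) : ℂ) * Complex.I)

theorem norm_gammaKer (a t : ℝ) {v : ℝ} (hv : 0 < v) :
    ‖gammaKer a t v‖ = v ^ (a - 1) * Real.exp (-v) := by
  rw [gammaKer, norm_mul, Complex.norm_exp_ofReal_mul_I, mul_one, Complex.norm_real,
    Real.norm_of_nonneg (by positivity)]

theorem aesm_gammaKer (a t : ℝ) :
    AEStronglyMeasurable (gammaKer a t) (volume.restrict (Ioi 0)) := by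
  refine ContinuousOn.aestronglyMeasurable (fun v hv => ?_) measurableSet_Ioi
  have hv : 0 < v := hv
  refine ContinuousAt.continuousWithinAt ?_
  refine ContinuousAt.mul ?_ (by fun_prop)
  exact Complex.continuous_ofReal.continuousAt.comp
    ((Real.continuousAt_rpow_const v _ (Or.inl hv.ne')).mul (by fun_prop))

theorem integrableOn_gammaKer {a : ℝ} (ha : 0 < a) (t : ℝ) :
    IntegrableOn (gammaKer a t) (Ioi 0) := by
  have h := integrableOn_gamma ha one_pos
  simp only [one_mul] at h
  refine Integrable.mono' h (aesm_gammaKer a t) ?_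
  exact (ae_restrict_iff' measurableSet_Ioi).mpr (ae_of_all _ fun v hv => (norm_gammaKer a t hv).le)

theorem hasDerivAt_integral_gammaKer {a : ℝ} (ha : 0 < a) (t : ℝ) :
    HasDerivAt (fun t => ∫ v in Ioi (0 : ℝ), gammaKer a t v)
      (-Complex.I * ∫ v in Ioi (0 : ℝ), gammaKer (a + 1) t v) t := by
  have hb := integrableOn_gamma (show 0 < a + 1 by linarith) one_pos
  simp only [one_mul] at hb
  have key := hasDerivAt_integral_of_dominated_loc_of_deriv_le
    (μ := volume.restrict (Ioi (0 : ℝ)))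
    (F := fun t v => gammaKer a t v) (F' := fun t v => -Complex.I * gammaKer (a + 1) t v)
    (bound := fun v => v ^ (a + 1 - 1) * Real.exp (-v)) (x₀ := t) univ_mem
    (Eventually.of_forall fun y => aesm_gammaKer a y) (integrableOn_gammaKer ha t)
    ((aesm_gammaKer (a + 1) t).const_mul _) ?_ hb ?_
  · rw [← MeasureTheory.integral_const_mul]
    exact key.2
  · refine (ae_restrict_iff' measurableSet_Ioi).mpr (ae_of_all _ fun v hv y _ => ?_)
    rw [norm_mul, norm_gammaKer _ _ hv, norm_neg, Complex.norm_I, one_mul]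
  · refine (ae_restrict_iff' measurableSet_Ioi).mpr (ae_of_all _ fun v hv y _ => ?_)
    have hv : 0 < v := hv
    have h1 : HasDerivAt (fun t : ℝ => ((-(t * v) : ℝ) : ℂ)) ((-(1 * v) : ℝ) : ℂ) y :=
      ((hasDerivAt_id y).mul_const v).neg.ofReal_comp
    refine ((h1.mul_const Complex.I).cexp.const_mul
      (((v ^ (a - 1) * Real.exp (-v) : ℝ) : ℂ))).congr_deriv ?_
    rw [gammaKer, show a + 1 - 1 = a - 1 + 1 by ring, Real.rpow_add_one hv.ne']
    push_cast
    ring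

/-- Integration of the derivative of `v^a e^(-(1+it)v)`. -/
theorem gammaKer_ibp {a : ℝ} (ha : 0 < a) (t : ℝ) :
    (1 + t * Complex.I) * ∫ v in Ioi (0 : ℝ), gammaKer (a + 1) t v
      = a * ∫ v in Ioi (0 : ℝ), gammaKer a t v := by
  have i1 := (integrableOn_gammaKer ha t).const_mul (a : ℂ)
  have i2 := (integrableOn_gammaKer (show 0 < a + 1 by linarith) t).const_mul (1 + t * Complex.I)
  have key := integral_Ioi_of_hasDerivAt_of_tendsto (a := 0) (m := 0)
    (f := fun v : ℝ => gammaKer (a + 1) t v) ?_ ?_ (i1.sub i2) ?_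
  · have h0 : gammaKer (a + 1) t 0 = 0 := by
      simp [gammaKer, Real.zero_rpow ha.ne']
    rw [h0, sub_zero] at key
    have h1 := (MeasureTheory.integral_sub i1 i2).symm.trans key
    rw [MeasureTheory.integral_const_mul, MeasureTheory.integral_const_mul] at h1
    linear_combination -h1
  · refine ContinuousAt.continuousWithinAt ?_
    refine ContinuousAt.mul ?_ (by fun_prop)
    exact Complex.continuous_ofReal.continuousAt.comp
      ((Real.continuousAt_rpow_const 0 _ (Or.inr (by linarith))).mul (by fun_prop))
  · intro v hv
    have hv : 0 < v := hv
    have h1 : HasDerivAt (fun v : ℝ => v ^ (a + 1 - 1)) ((a + 1 - 1) * v ^ (a + 1 - 1 - 1)) v :=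
      Real.hasDerivAt_rpow_const (Or.inl hv.ne')
    have h2 : HasDerivAt (fun v : ℝ => Real.exp (-v)) (Real.exp (-v) * -1) v :=
      (hasDerivAt_id v).neg.exp
    have h3 : HasDerivAt (fun v : ℝ => ((-(t * v) : ℝ) : ℂ)) ((-(t * 1) : ℝ) : ℂ) v :=
      ((hasDerivAt_id v).const_mul t).neg.ofReal_comp
    refine ((h1.mul h2).ofReal_comp.mul (h3.mul_const Complex.I).cexp).congr_deriv ?_
    simp only [Pi.sub_apply, Pi.mul_apply, gammaKer]
    rw [show a + 1 - 1 = a by ring, show v ^ a = v ^ (a - 1) * v by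
      rw [← Real.rpow_add_one hv.ne']; congr 1; ring]
    push_cast
    ring
  · have h1 := tendsto_rpow_mul_exp_neg_mul_atTop_nhds_zero a 1 one_pos
    refine squeeze_zero_norm' ?_ h1
    filter_upwards [eventually_gt_atTop 0] with v hv
    rw [norm_gammaKer _ _ hv, show a + 1 - 1 = a by ring, neg_one_mul]

theorem hasDerivAt_cos_arctan_rpow (p t : ℝ) :
    HasDerivAt (fun t => Real.cos (Real.arctan t) ^ p)
      (-(p * t / (1 + t ^ 2) * Real.cos (Real.arctan t) ^ p)) t := by
  have hc := Real.cos_arctan_pos t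
  refine ((Real.hasDerivAt_arctan t).cos.rpow_const (p := p) (Or.inl hc.ne')).congr_deriv ?_
  have h1 : Real.sin (Real.arctan t) = t * Real.cos (Real.arctan t) := by
    have := Real.tan_arctan t
    rwa [Real.tan_eq_sin_div_cos, div_eq_iff hc.ne'] at this
  have h2 : Real.cos (Real.arctan t) ^ p
      = Real.cos (Real.arctan t) ^ (p - 1) * Real.cos (Real.arctan t) := by
    rw [← Real.rpow_add_one hc.ne']; congr 1; ring
  rw [h1, h2]
  ring

/-- The characteristic function of the gamma distribution, in polar form. The quotient of the two
sides has zero derivative in `t`, by `gammaKer_ibp`. -/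
theorem integral_gammaKer {a : ℝ} (ha : 0 < a) (t : ℝ) :
    ∫ v in Ioi (0 : ℝ), gammaKer a t v = Real.Gamma a *
      ((Real.cos (Real.arctan t) ^ a : ℝ) *
        Complex.exp (((-(a * Real.arctan t) : ℝ) : ℂ) * Complex.I)) := by
  set G : ℝ → ℂ := fun t => ∫ v in Ioi (0 : ℝ), gammaKer a t v with hGdef
  set E : ℝ → ℂ := fun t => ((Real.cos (Real.arctan t) ^ (-a) : ℝ) : ℂ) *
    Complex.exp (((a * Real.arctan t : ℝ) : ℂ) * Complex.I) with hEdef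
  have hd : ∀ t, HasDerivAt (fun t => G t * E t) 0 t := by
    intro t
    have h1 := hasDerivAt_integral_gammaKer ha t
    have h2 : HasDerivAt E _ t := (hasDerivAt_cos_arctan_rpow (-a) t).ofReal_comp.mul
      ((((Real.hasDerivAt_arctan t).const_mul a).ofReal_comp.mul_const Complex.I).cexp)
    refine (h1.mul h2).congr_deriv ?_
    have h3 := gammaKer_ibp ha t
    have h4 : (1 : ℂ) + t * Complex.I ≠ 0 := by
      intro h
      have := congrArg Complex.re h
      simp at this
    have h5 : (1 : ℂ) + t ^ 2 ≠ 0 := by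
      norm_cast
      positivity
    have h6 := eq_div_of_mul_eq h4 ((mul_comm _ _).trans h3)
    have h7 : Complex.I / (1 + t * Complex.I) = (t + Complex.I) / (1 + t ^ 2) := by
      rw [div_eq_div_iff h4 h5]
      linear_combination -(t : ℂ) * Complex.I_sq
    rw [h6]
    simp only [hEdef]
    push_cast
    linear_combination (-a * (∫ v in Ioi (0 : ℝ), gammaKer a t v) *
      ((Real.cos (Real.arctan t) ^ (-a) : ℝ) : ℂ) *
      Complex.exp (a * Complex.arctan t * Complex.I)) * h7
  have hc : ∀ t, G t * E t = G 0 * E 0 := fun t =>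
    is_const_of_deriv_eq_zero (fun s => (hd s).differentiableAt) (fun s => (hd s).deriv) t 0
  have hG0 : G 0 = Real.Gamma a := by
    rw [Real.Gamma_eq_integral ha, ← integral_complex_ofReal]
    simp only [hGdef, gammaKer]
    congr 1
    funext v
    simp [mul_comm]
  have hE0 : E 0 = 1 := by
    simp only [hEdef, Real.arctan_zero]
    simp
  have h := hc t
  rw [hG0, hE0, mul_one] at h
  have hEE : E t * ((Real.cos (Real.arctan t) ^ a : ℝ) *
        Complex.exp (((-(a * Real.arctan t) : ℝ) : ℂ) * Complex.I)) = 1 := by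
    have hcos := Real.cos_arctan_pos t
    simp only [hEdef]
    rw [mul_mul_mul_comm, ← Complex.ofReal_mul, ← Real.rpow_add hcos, ← Complex.exp_add,
      ← add_mul, ← Complex.ofReal_add]
    simp
  rw [← h]
  change G t = _
  rw [mul_assoc, hEE, mul_one]

theorem fourier_gammaDens {a : ℝ} (ha : 0 < a) (ξ : ℝ) :
    𝓕 (gammaDens a) ξ = (Real.cos (Real.arctan (2 * Real.pi * ξ)) ^ a : ℝ) *
      Complex.exp (((-(a * Real.arctan (2 * Real.pi * ξ)) : ℝ) : ℂ) * Complex.I) := by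
  have hG : (Real.Gamma a : ℂ) ≠ 0 := by exact_mod_cast (Real.Gamma_pos_of_pos ha).ne'
  have key := integral_gammaKer ha (2 * Real.pi * ξ)
  rw [← mul_right_inj' hG, ← key, Real.fourier_real_eq_integral_exp_smul,
    ← MeasureTheory.integral_const_mul, ← MeasureTheory.integral_indicator measurableSet_Ioi]
  congr 1
  funext v
  by_cases hv : v ∈ Ioi (0 : ℝ)
  · simp only [gammaDens, indicator_of_mem hv, smul_eq_mul, gammaKer]
    rw [show -2 * Real.pi * v * ξ = -(2 * Real.pi * ξ * v) by ring]
    push_cast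
    field_simp
  · simp only [gammaDens, indicator_of_notMem hv, smul_zero, mul_zero]

/-- The correlation of two gamma densities: the density of the difference of two independent
gamma variables, of shapes `a` and `b`. -/
noncomputable def gammaDiff (a b : ℝ) : ℝ → ℂ :=
  gammaDens a ⋆[ContinuousLinearMap.mul ℂ ℂ] fun v => gammaDens b (-v)

theorem integrable_gammaDiff {a b : ℝ} (ha : 0 < a) (hb : 0 < b) :
    Integrable (gammaDiff a b) :=
  (integrable_gammaDens ha).integrable_convolution _ (integrable_gammaDens hb).comp_neg

theorem fourier_gammaDiff {a b : ℝ} (ha : 0 < a) (hb : 0 < b) (ξ : ℝ) :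
    𝓕 (gammaDiff a b) ξ = (Real.cos (Real.arctan (2 * Real.pi * ξ)) ^ (a + b) : ℝ) *
      Complex.exp ((((b - a) * Real.arctan (2 * Real.pi * ξ) : ℝ) : ℂ) * Complex.I) := by
  have hneg : 𝓕 (fun v => gammaDens b (-v)) ξ = 𝓕 (gammaDens b) (-ξ) := by
    rw [Real.fourier_real_eq_integral_exp_smul, Real.fourier_real_eq_integral_exp_smul,
      ← integral_neg_eq_self]
    simp
  rw [gammaDiff, Real.fourier_mul_convolution_eq (integrable_gammaDens ha)
    (integrable_gammaDens hb).comp_neg, hneg, fourier_gammaDens ha, fourier_gammaDens hb,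
    mul_mul_mul_comm, ← Complex.exp_add, mul_neg, Real.arctan_neg, Real.cos_neg,
    ← Complex.ofReal_mul, ← Real.rpow_add (Real.cos_arctan_pos _)]
  congr 2
  push_cast
  ring

theorem gammaDiff_eq (a b : ℝ) {y : ℝ} (hy : 0 < y) :
    gammaDiff a b y = ((y ^ (a + b - 1) * Real.exp (-y) * lapW a b (2 * y) /
      (Real.Gamma a * Real.Gamma b) : ℝ) : ℂ) := by
  have h1 : gammaDiff a b y = ∫ u in Ioi (0 : ℝ), ((u ^ (b - 1) * (y + u) ^ (a - 1) *
      Real.exp (-(y + 2 * u)) / (Real.Gamma a * Real.Gamma b) : ℝ) : ℂ) := by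
    rw [gammaDiff, convolution_def, ← integral_add_right_eq_self _ y,
      ← MeasureTheory.integral_indicator measurableSet_Ioi]
    congr 1
    funext u
    by_cases hu : u ∈ Ioi (0 : ℝ)
    · have hu' : 0 < u := hu
      have hyu : u + y ∈ Ioi (0 : ℝ) := by
        change 0 < u + y
        linarith
      simp only [ContinuousLinearMap.mul_apply', gammaDens, sub_add_cancel_right, neg_neg,
        indicator_of_mem hu, indicator_of_mem hyu]
      rw [← Complex.ofReal_mul]
      congr 1
      rw [show -(y + 2 * u) = -(u + y) + -u by ring, Real.exp_add, add_comm u y]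
      field_simp
    · simp only [ContinuousLinearMap.mul_apply', gammaDens, sub_add_cancel_right, neg_neg,
        indicator_of_notMem hu, mul_zero]
  have h2 := integral_comp_mul_left_Ioi (fun u : ℝ => u ^ (b - 1) * (y + u) ^ (a - 1) *
      Real.exp (-(y + 2 * u)) / (Real.Gamma a * Real.Gamma b)) 0 hy
  rw [mul_zero, smul_eq_mul, ← div_eq_inv_mul, eq_div_iff hy.ne',
    ← MeasureTheory.integral_mul_const] at h2
  rw [h1, integral_complex_ofReal, ← h2, lapW, mul_div_assoc,
    ← MeasureTheory.integral_div, ← MeasureTheory.integral_const_mul]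
  congr 1
  refine setIntegral_congr_fun measurableSet_Ioi fun s hs => ?_
  have hs : 0 < s := hs
  rw [show y + y * s = y * (1 + s) by ring, Real.mul_rpow hy.le hs.le,
    Real.mul_rpow hy.le (by positivity), show a + b - 1 = 1 + (b - 1) + (a - 1) by ring,
    Real.rpow_add hy, Real.rpow_add hy, Real.rpow_one,
    show -(y + 2 * (y * s)) = -y + -(2 * y * s) by ring, Real.exp_add]
  ring

theorem continuousAt_gammaDiff (a : ℝ) {b y : ℝ} (hb : 0 < b) (hy : 0 < y) :
    ContinuousAt (gammaDiff a b) y := by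
  have h : (fun y => ((y ^ (a + b - 1) * Real.exp (-y) * lapW a b (2 * y) /
      (Real.Gamma a * Real.Gamma b) : ℝ) : ℂ)) =ᶠ[𝓝 y] gammaDiff a b := by
    filter_upwards [Ioi_mem_nhds hy] with z hz
    exact (gammaDiff_eq a b hz).symm
  refine ContinuousAt.congr ?_ h
  refine Complex.continuous_ofReal.continuousAt.comp (ContinuousAt.div_const ?_ _)
  refine ((Real.continuousAt_rpow_const y _ (Or.inl hy.ne')).mul (by fun_prop)).mul ?_
  exact ContinuousAt.comp (f := fun y : ℝ => 2 * y)
    (hasDerivAt_lapW a hb (by positivity)).continuousAt (by fun_prop)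

theorem integrable_cos_arctan_rpow {p : ℝ} (hp : 1 < p) :
    Integrable fun t : ℝ => Real.cos (Real.arctan t) ^ p := by
  have h := integrable_rpow_neg_one_add_norm_sq (E := ℝ) (μ := volume) (r := p) (by simpa using hp)
  refine h.congr (ae_of_all _ fun t => ?_)
  have h1 : 0 < 1 + t ^ 2 := by positivity
  simp only [Real.norm_eq_abs, sq_abs]
  rw [Real.cos_arctan, one_div, Real.sqrt_eq_rpow, ← Real.rpow_neg h1.le, ← Real.rpow_mul h1.le]
  congr 1
  ring

/-- Fourier inversion for `gammaDiff`. -/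
theorem integral_cos_of_pos {a b y : ℝ} (ha : 0 < a) (hb : 0 < b) (hab : 1 < a + b) (hy : 0 < y) :
    ∫ t, Real.cos (Real.arctan t) ^ (a + b) * Real.cos (y * t + (b - a) * Real.arctan t)
      = 2 * Real.pi * (y ^ (a + b - 1) * Real.exp (-y) * lapW a b (2 * y) /
        (Real.Gamma a * Real.Gamma b)) := by
  have hπ := Real.pi_pos
  have hcont : Continuous fun t : ℝ => Real.cos (Real.arctan t) ^ (a + b) := by
    refine Continuous.rpow_const (by fun_prop) fun t => Or.inl (Real.cos_arctan_pos t).ne'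
  have hint := integrable_cos_arctan_rpow hab
  have hF : Integrable (𝓕 (gammaDiff a b)) := by
    have h2 := hint.comp_mul_left' (R := 2 * Real.pi) (by positivity)
    have e : 𝓕 (gammaDiff a b) = fun ξ => _ := funext (fourier_gammaDiff ha hb)
    rw [e]
    refine Integrable.mono' h2 ?_ (ae_of_all _ fun ξ => ?_)
    · refine Continuous.aestronglyMeasurable ?_
      refine (Complex.continuous_ofReal.comp (hcont.comp (by fun_prop))).mul (by fun_prop)
    · rw [norm_mul, Complex.norm_exp_ofReal_mul_I, mul_one, Complex.norm_real,
        Real.norm_of_nonneg (Real.rpow_nonneg (Real.cos_arctan_pos _).le _)]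
  have hinv := (integrable_gammaDiff ha hb).fourierInv_fourier_eq hF
    (continuousAt_gammaDiff a hb hy)
  rw [Real.fourierInv_eq', gammaDiff_eq a b hy] at hinv
  have hcov := MeasureTheory.Measure.integral_comp_mul_left (fun t : ℝ =>
    ((Real.cos (Real.arctan t) ^ (a + b) : ℝ) : ℂ) *
      Complex.exp (((y * t + (b - a) * Real.arctan t : ℝ) : ℂ) * Complex.I)) (2 * Real.pi)
  have hI : ∫ ξ : ℝ, ((Real.cos (Real.arctan (2 * Real.pi * ξ)) ^ (a + b) : ℝ) : ℂ) *
      Complex.exp (((y * (2 * Real.pi * ξ) + (b - a) * Real.arctan (2 * Real.pi * ξ) : ℝ) : ℂ) *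
        Complex.I) = ((y ^ (a + b - 1) * Real.exp (-y) * lapW a b (2 * y) /
          (Real.Gamma a * Real.Gamma b) : ℝ) : ℂ) := by
    rw [← hinv]
    congr 1
    funext ξ
    rw [fourier_gammaDiff ha hb, smul_eq_mul, mul_left_comm (Complex.exp _), ← Complex.exp_add]
    congr 2
    simp
    ring
  rw [hI] at hcov
  have hcI : Integrable (fun t : ℝ => ((Real.cos (Real.arctan t) ^ (a + b) : ℝ) : ℂ) *
      Complex.exp (((y * t + (b - a) * Real.arctan t : ℝ) : ℂ) * Complex.I)) := by
    refine Integrable.mono' hint ?_ (ae_of_all _ fun t => ?_)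
    · refine Continuous.aestronglyMeasurable ?_
      exact (Complex.continuous_ofReal.comp hcont).mul (by fun_prop)
    · rw [norm_mul, Complex.norm_exp_ofReal_mul_I, mul_one, Complex.norm_real,
        Real.norm_of_nonneg (Real.rpow_nonneg (Real.cos_arctan_pos _).le _)]
  have hre := congrArg Complex.re hcov
  rw [Complex.smul_re, Complex.ofReal_re, ← Complex.reCLM_apply,
    ← ContinuousLinearMap.integral_comp_comm _ hcI, abs_of_pos (by positivity), smul_eq_mul] at hre
  rw [hre, ← mul_assoc, mul_inv_cancel₀ (by positivity), one_mul]
  congr 1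
  funext t
  rw [Complex.reCLM_apply, Complex.re_ofReal_mul, Complex.exp_ofReal_mul_I_re]

/-! ### The cosine integral and its recurrence -/

/-- The cosine integral after the substitution `v = arctan t`, with parameters `α = a + b - 1` and
`β = b - a`. -/
noncomputable def cosInt (a b x : ℝ) : ℝ :=
  ∫ t in Ioi (0 : ℝ), Real.cos (Real.arctan t) ^ (a + b) *
    Real.cos (x / 2 * t + (b - a) * Real.arctan t)

theorem integral_eq_cosInt (α β x : ℝ) :
    ∫ v in (0 : ℝ)..(Real.pi / 2), Real.cos v ^ (α - 1) * Real.cos (x / 2 * Real.tan v + β * v)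
      = cosInt ((α - β + 1) / 2) ((α + β + 1) / 2) x := by
  have hπ := Real.pi_pos
  have himg : Real.arctan '' Ioi 0 = Ioo 0 (Real.pi / 2) := by
    ext v
    constructor
    · rintro ⟨t, ht, rfl⟩
      exact ⟨Real.arctan_pos.mpr ht, Real.arctan_lt_pi_div_two t⟩
    · rintro ⟨h0, h1⟩
      exact ⟨Real.tan v, Real.tan_pos_of_pos_of_lt_pi_div_two h0 h1,
        Real.arctan_tan (by linarith) h1⟩
  have hcov := integral_image_eq_integral_abs_deriv_smul (s := Ioi (0 : ℝ))
    (f := Real.arctan) (f' := fun t => 1 / (1 + t ^ 2)) measurableSet_Ioi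
    (fun t _ => (Real.hasDerivAt_arctan t).hasDerivWithinAt) Real.arctan_injective.injOn
    (fun v => Real.cos v ^ (α - 1) * Real.cos (x / 2 * Real.tan v + β * v))
  rw [himg] at hcov
  rw [intervalIntegral.integral_of_le (by positivity), integral_Ioc_eq_integral_Ioo, hcov, cosInt]
  refine setIntegral_congr_fun measurableSet_Ioi fun t _ => ?_
  have hc := Real.cos_arctan_pos t
  rw [abs_of_pos (by positivity), ← Real.cos_sq_arctan, Real.tan_arctan, smul_eq_mul, ← mul_assoc,
    ← Real.rpow_two, ← Real.rpow_add hc,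
    show (α - β + 1) / 2 + (α + β + 1) / 2 = 2 + (α - 1) by ring,
    show (α + β + 1) / 2 - (α - β + 1) / 2 = β by ring]

theorem cosInt_of_pos {a b x : ℝ} (ha : 0 < a) (hb : 0 < b) (hab : 1 < a + b) (hx : 0 < x) :
    cosInt a b x = Real.pi * ((x / 2) ^ (a + b - 1) * Real.exp (-(x / 2)) * lapW a b x /
        (Real.Gamma a * Real.Gamma b)) := by
  have h1 := integral_cos_of_pos ha hb hab (half_pos hx)
  have h2 := integral_comp_abs (f := fun t => Real.cos (Real.arctan t) ^ (a + b) *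
    Real.cos (x / 2 * t + (b - a) * Real.arctan t))
  have h3 : ∀ t : ℝ, Real.cos (Real.arctan |t|) ^ (a + b) *
      Real.cos (x / 2 * |t| + (b - a) * Real.arctan |t|) = Real.cos (Real.arctan t) ^ (a + b) *
      Real.cos (x / 2 * t + (b - a) * Real.arctan t) := by
    intro t
    rcases abs_choice t with h | h
    · rw [h]
    · rw [h, Real.arctan_neg, Real.cos_neg, mul_neg, mul_neg, ← neg_add, Real.cos_neg]
  simp only [h3] at h2
  rw [h1, show 2 * (x / 2) = x by ring] at h2
  rw [cosInt]
  linarith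

theorem integrable_cosInt {a b : ℝ} (x : ℝ) (hab : 1 < a + b) :
    Integrable fun t : ℝ => Real.cos (Real.arctan t) ^ (a + b) *
      Real.cos (x / 2 * t + (b - a) * Real.arctan t) := by
  refine Integrable.mono' (integrable_cos_arctan_rpow hab) ?_ (ae_of_all _ fun t => ?_)
  · refine Continuous.aestronglyMeasurable (Continuous.mul ?_ (by fun_prop))
    exact Continuous.rpow_const (by fun_prop) fun t => Or.inl (Real.cos_arctan_pos t).ne'
  · have h := Real.rpow_nonneg (Real.cos_arctan_pos t).le (a + b)
    rw [norm_mul, Real.norm_of_nonneg h]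
    exact mul_le_of_le_one_right h (Real.abs_cos_le_one _)

/-- The identity `2 cos θ cos ω = cos (ω + θ) + cos (ω - θ)` under the integral sign. -/
theorem cosInt_rec {a b : ℝ} (x : ℝ) (hab : 2 < a + b) :
    2 * cosInt a b x = cosInt (a - 1) b x + cosInt a (b - 1) x := by
  rw [cosInt, cosInt, cosInt, ← MeasureTheory.integral_add
    (integrable_cosInt x (by linarith)).integrableOn
    (integrable_cosInt x (by linarith)).integrableOn,
    ← MeasureTheory.integral_const_mul]
  congr 1
  funext t
  have hc := Real.cos_arctan_pos t
  rw [show a - 1 + b = a + b - 1 by ring, show a + (b - 1) = a + b - 1 by ring,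
    show x / 2 * t + (b - (a - 1)) * Real.arctan t
      = (x / 2 * t + (b - a) * Real.arctan t) + Real.arctan t by ring,
    show x / 2 * t + (b - 1 - a) * Real.arctan t
      = (x / 2 * t + (b - a) * Real.arctan t) - Real.arctan t by ring,
    Real.cos_add (x / 2 * t + _), Real.cos_sub]
  have h : Real.cos (Real.arctan t) ^ (a + b)
      = Real.cos (Real.arctan t) ^ (a + b - 1) * Real.cos (Real.arctan t) := by
    rw [← Real.rpow_add_one hc.ne']; congr 1; ring
  rw [h]
  ring

/-- The value of `cosInt a b x`, for `a + b > 1` not an integer. -/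
noncomputable def cosVal (a b x : ℝ) : ℝ :=
  Real.pi ^ 2 * (x / 2) ^ (a + b - 1) * Real.exp (-(x / 2)) / Real.sin (Real.pi * (a + b - 1)) *
    (Real.Gamma a)⁻¹ * kummerT a b x

/-- The recurrence behind `cosVal_rec`: contiguity in the first parameter for one of the two Kummer
solutions and in the second parameter for the other. -/
theorem kummerT_rec (a b : ℝ) {x : ℝ} (hx : 0 < x) :
    x * kummerT a b x + (a - 1) * kummerT (a - 1) b x + kummerT a (b - 1) x = 0 := by
  have h1 := regM_contig_a (b - 1) (a + b - 1) x
  rw [sub_add_cancel, sub_add_cancel] at h1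
  have h2 := regM_contig_c (1 - a) (2 - a - b) x
  have h3 := inv_Gamma_eq (b - 1)
  rw [sub_add_cancel] at h3
  have h4 := inv_Gamma_eq (1 - a)
  have h5 : x ^ (2 - a - b) = x ^ (1 - a - b) * x := by
    rw [← Real.rpow_add_one hx.ne']; congr 1; ring
  rw [show 1 - a + 1 = 2 - a by ring, show 2 - a - b + 1 = 3 - a - b by ring] at h2
  rw [show 1 - a + 1 = 2 - a by ring] at h4
  rw [kummerT, kummerT, kummerT, show 1 - (a - 1) - b = 2 - a - b by ring,
    show 2 - (a - 1) - b = 3 - a - b by ring, show 1 - a - (b - 1) = 2 - a - b by ring,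
    show 2 - a - (b - 1) = 3 - a - b by ring, show 1 - (a - 1) = 2 - a by ring,
    show a - 1 + b = a + b - 1 by ring, show a + (b - 1) = a + b - 1 by ring, h3, h4, h5]
  linear_combination (x ^ (1 - a - b) * x * (Real.Gamma b)⁻¹) * h2
    + (1 - a) * (Real.Gamma (2 - a))⁻¹ * h1

theorem cosVal_rec (a b : ℝ) {x : ℝ} (hx : 0 < x) :
    2 * cosVal a b x = cosVal (a - 1) b x + cosVal a (b - 1) x := by
  have h1 := kummerT_rec a b hx
  have h2 := inv_Gamma_eq (a - 1)
  rw [sub_add_cancel] at h2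
  have h3 : (x / 2) ^ (a + b - 1) = (x / 2) ^ (a + b - 2) * (x / 2) := by
    rw [← Real.rpow_add_one (by positivity)]; congr 1; ring
  have h4 : Real.sin (Real.pi * (a + b - 1)) = -Real.sin (Real.pi * (a + b - 2)) := by
    rw [← Real.sin_add_pi]; congr 1; ring
  rw [cosVal, cosVal, cosVal, show a - 1 + b - 1 = a + b - 2 by ring,
    show a + (b - 1) - 1 = a + b - 2 by ring, h2, h3, h4, div_neg]
  linear_combination (-(Real.pi ^ 2 * (x / 2) ^ (a + b - 2) * Real.exp (-(x / 2)) /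
    Real.sin (Real.pi * (a + b - 2)) * (Real.Gamma a)⁻¹)) * h1

theorem cosInt_eq_of_pos {a b x : ℝ} (ha : 0 < a) (hb : 0 < b) (hab : 1 < a + b)
    (hint : ∀ k : ℤ, a + b ≠ k) (hx : 0 < x) : cosInt a b x = cosVal a b x := by
  have h0 : 0 ≤ a + b := by linarith
  have h1 : (⌊a + b⌋₊ : ℝ) < a + b :=
    lt_of_le_of_ne (Nat.floor_le h0) fun h => hint ⌊a + b⌋₊ (by simpa using h.symm)
  have hG := (Real.Gamma_pos_of_pos hb).ne'
  rw [cosInt_of_pos ha hb hab hx, connection ⌊a + b⌋₊ hb h1 (Nat.lt_floor_add_one _) hx, cosVal]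
  field_simp

/-- The recurrence solved for its `(a - 1, b)` term lowers `a` at the cost of lowering `b`. The
condition `a + b > 1` keeps `b` positive, since `b > 1` whenever `a ≤ 0`. -/
theorem cosInt_eq_of_pos_right {x : ℝ} (hx : 0 < x) (n : ℕ) : ∀ {a b : ℝ}, -(n : ℝ) < a → 0 < b →
    1 < a + b → (∀ k : ℤ, a + b ≠ k) → cosInt a b x = cosVal a b x := by
  induction n with
  | zero =>
    intro a b ha hb hab hint
    exact cosInt_eq_of_pos (by simpa using ha) hb hab hint hx
  | succ n ih =>
    intro a b ha hb hab hint
    push_cast at ha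
    rcases lt_or_ge 0 a with h | h
    · exact cosInt_eq_of_pos h hb hab hint hx
    · have r1 := cosInt_rec (a := a + 1) (b := b) x (by linarith)
      have r2 := cosVal_rec (a + 1) b hx
      have e1 := ih (a := a + 1) (b := b) (by linarith) hb (by linarith) fun k hk =>
        hint (k - 1) (by push_cast; linarith)
      have e2 := ih (a := a + 1) (b := b - 1) (by linarith) (by linarith) (by linarith) fun k hk =>
        hint k (by linarith)
      rw [add_sub_cancel_right] at r1 r2
      linarith

/-- The evaluation of the cosine integral, by solving the recurrence for its `(a, b - 1)` term. -/
theorem cosInt_eq {x : ℝ} (hx : 0 < x) (n : ℕ) : ∀ {a b : ℝ}, -(n : ℝ) < b →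
    1 < a + b → (∀ k : ℤ, a + b ≠ k) → cosInt a b x = cosVal a b x := by
  have hpos : ∀ {a b : ℝ}, 0 < b → 1 < a + b → (∀ k : ℤ, a + b ≠ k) →
      cosInt a b x = cosVal a b x := by
    intro a b hb hab hint
    obtain ⟨m, hm⟩ := exists_nat_gt (-a)
    exact cosInt_eq_of_pos_right hx m (by linarith) hb hab hint
  induction n with
  | zero =>
    intro a b hb hab hint
    exact hpos (by simpa using hb) hab hint
  | succ n ih =>
    intro a b hb hab hint
    push_cast at hb
    rcases lt_or_ge 0 b with h | h
    · exact hpos h hab hint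
    · have r1 := cosInt_rec (a := a) (b := b + 1) x (by linarith)
      have r2 := cosVal_rec a (b + 1) hx
      have e1 := ih (a := a) (b := b + 1) (by linarith) (by linarith) fun k hk =>
        hint (k - 1) (by push_cast; linarith)
      have e2 := ih (a := a - 1) (b := b + 1) (by linarith) (by linarith) fun k hk =>
        hint k (by linarith)
      rw [add_sub_cancel_right] at r1 r2
      linarith

/-- Euler's reflection formula for `1 / Γ`, valid also at the poles. -/
theorem inv_Gamma_mul_inv_Gamma (a : ℝ) :
    (Real.Gamma a)⁻¹ * (Real.Gamma (1 - a))⁻¹ = Real.sin (Real.pi * a) / Real.pi := by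
  rw [← mul_inv, Real.Gamma_mul_Gamma_one_sub, inv_div]

end KummerCosine

/-- Evaluation of ∫₀^{π/2} cos^{α−1}v · cos((x/2)tan v + βv) dv in terms of φ. -/
theorem kummer_cosine_integral_eval (α β x : ℝ) (hx : 0 < x) (hα : 0 < α)
    (hαint : ∀ k : ℤ, α ≠ (k : ℝ)) :
    ∫ v in (0 : ℝ)..(Real.pi / 2),
        Real.cos v ^ (α - 1) * Real.cos (x / 2 * Real.tan v + β * v)
      = Real.pi * Real.Gamma α * Real.exp (-x / 2)
          / (2 ^ α * Real.Gamma ((α - β + 1) / 2) * Real.Gamma ((α + β + 1) / 2))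
          * kummerPhi ((β - α + 1) / 2) (1 - α) x
        - Real.pi * Real.cos ((α - β) * Real.pi / 2) * x ^ α * Real.exp (-x / 2)
          / (2 ^ α * Real.sin (α * Real.pi) * Real.Gamma (α + 1))
          * kummerPhi ((β + α + 1) / 2) (1 + α) x := by
  obtain ⟨n, hn⟩ := exists_nat_gt (-((α + β + 1) / 2))
  rw [KummerCosine.integral_eq_cosInt, KummerCosine.cosInt_eq hx n (by linarith) (by linarith)
    (fun k hk => hαint (k - 1) (by push_cast; linarith)),
    KummerCosine.kummerPhi_eq (fun m h => hαint (m + 1) (by push_cast; linarith)),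
    KummerCosine.kummerPhi_eq (fun m h => by have := m.cast_nonneg (α := ℝ); linarith),
    KummerCosine.cosVal, KummerCosine.kummerT]
  set a := (α - β + 1) / 2 with ha
  have hrefl := KummerCosine.inv_Gamma_mul_inv_Gamma a
  have hcos : Real.cos ((α - β) * Real.pi / 2) = Real.sin (Real.pi * a) := by
    rw [← Real.cos_sub_pi_div_two]
    congr 1
    rw [ha]
    ring
  have hreflα := Real.Gamma_mul_Gamma_one_sub α
  have hG := (Real.Gamma_pos_of_pos (show 0 < 1 + α by linarith)).ne'
  have hpow : x ^ α * x ^ (-α) = 1 := by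
    rw [← Real.rpow_add hx, add_neg_cancel, Real.rpow_zero]
  have h2 : (2 : ℝ) ^ α ≠ 0 := by positivity
  have hπ := Real.pi_ne_zero
  rw [hcos, show (β - α + 1) / 2 = 1 - a by rw [ha]; ring,
    show (β + α + 1) / 2 = (α + β + 1) / 2 by ring,
    show a + (α + β + 1) / 2 - 1 = α by rw [ha]; ring,
    show 1 - a - (α + β + 1) / 2 = -α by rw [ha]; ring,
    show 2 - a - (α + β + 1) / 2 = 1 - α by rw [ha]; ring,
    show a + (α + β + 1) / 2 = 1 + α by rw [ha]; ring, show -(x / 2) = -x / 2 by ring,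
    add_comm α 1, mul_comm α Real.pi, Real.div_rpow hx.le zero_le_two]
  set b := (α + β + 1) / 2
  set E := Real.exp (-x / 2)
  set s := Real.sin (Real.pi * α)
  set R := KummerCosine.regM (1 - a) (1 - α) x
  set Q := KummerCosine.regM b (1 + α) x
  have e1 : Real.pi * Real.Gamma α * E / (2 ^ α * Real.Gamma a * Real.Gamma b) *
      (Real.Gamma (1 - α) * R) = Real.pi * (Real.pi / s) * E * (2 ^ α)⁻¹ * (Real.Gamma a)⁻¹ *
        (Real.Gamma b)⁻¹ * R := by
    rw [← hreflα, div_eq_mul_inv, mul_inv, mul_inv]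
    ring
  have e2 : Real.pi * Real.sin (Real.pi * a) * x ^ α * E / (2 ^ α * s * Real.Gamma (1 + α)) *
      (Real.Gamma (1 + α) * Q) = Real.pi ^ 2 * (Real.sin (Real.pi * a) / Real.pi) * x ^ α * E *
        (2 ^ α)⁻¹ * s⁻¹ * Q := by
    field_simp
  rw [e1, e2, ← hrefl]
  simp only [div_eq_mul_inv]
  linear_combination (Real.pi ^ 2 * (2 ^ α)⁻¹ * E * s⁻¹ * (Real.Gamma a)⁻¹ * R *
    (Real.Gamma b)⁻¹) * hpow
end

section
/- For every real x > 0 and every real α > 0, ∫₀^{π/2} cos^{α−1}(v) · cos(x·tan v − (α+1)v) dv = π · x^α · e^{−x} / Γ(α+1). -/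
/-!
Substituting `v = arctan t` turns the integrand into the real part of
`exp (i x t) * (1 + i t) ^ (-(α + 1))`, which is even in `t`, so the integral is half of the
integral of this function over `ℝ`. Up to scaling, that full-line integral is the inverse Fourier
transform of the characteristic function of the Gamma distribution of shape `α + 1` and rate `1`,
so by Fourier inversion it equals `2 π` times the density `x ^ α * exp (-x) / Γ (α + 1)`.
Inversion applies because the transform decays like `|t| ^ (-(α + 1))` with `α + 1 > 1` and the
density is continuous at `x > 0`.

The transform itself, `complexMGF_gammaMeasure_one`, is obtained by analytic continuation from the
real moment generating function; inversion is `integral_exp_mul_cpow`, and its real part is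
`integral_cos_arctan`.
-/

open MeasureTheory intervalIntegral

open ProbabilityTheory in
lemma integral_gammaMeasure_one {E : Type*} [NormedAddCommGroup E] [NormedSpace ℝ E] {a : ℝ}
    (ha : 0 < a) (g : ℝ → E) :
    ∫ x, g x ∂(gammaMeasure a 1) = ∫ x, gammaPDFReal a 1 x • g x := by
  rw [gammaMeasure, integral_withDensity_eq_integral_toReal_smul]
  · congr with x
    rw [gammaPDF, ENNReal.toReal_ofReal (gammaPDFReal_nonneg ha one_pos x)]
  · exact (measurable_gammaPDFReal a 1).ennreal_ofReal
  · exact ae_of_all _ fun x => ENNReal.ofReal_lt_top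

open ProbabilityTheory Set in
lemma mgf_gammaMeasure_one {a : ℝ} (ha : 0 < a) {t : ℝ} (ht : t < 1) :
    mgf id (gammaMeasure a 1) t = (1 / (1 - t)) ^ a := by
  have h1 : 0 < 1 - t := by linarith
  have hΓ := (Real.Gamma_pos_of_pos ha).ne'
  rw [mgf, integral_gammaMeasure_one ha]
  have : (fun x : ℝ => gammaPDFReal a 1 x • Real.exp (t * id x)) =
      (Ici 0).indicator fun x => (1 / Real.Gamma a) *
        (x ^ (a - 1) * Real.exp (-((1 - t) * x))) := by
    ext x
    by_cases hx : 0 ≤ x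
    · have : Real.exp (-((1 - t) * x)) = Real.exp (-x) * Real.exp (t * x) := by
        rw [← Real.exp_add]; ring_nf
      simp [gammaPDFReal, hx, this]
      ring
    · simp [gammaPDFReal, hx]
  rw [this, MeasureTheory.integral_indicator measurableSet_Ici, integral_Ici_eq_integral_Ioi,
    MeasureTheory.integral_const_mul, Real.integral_rpow_mul_exp_neg_mul_Ioi ha h1]
  field_simp

open ProbabilityTheory Set Filter Topology in
/-- The Laplace transform of the Gamma distribution at complex arguments: both sides are analytic
on the half-plane `z.re < 1` and agree at the real points near `0`. -/
lemma complexMGF_gammaMeasure_one {a : ℝ} (ha : 0 < a) {z : ℂ} (hz : z.re < 1) :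
    complexMGF id (gammaMeasure a 1) z = (1 / (1 - z)) ^ (a : ℂ) := by
  have hsub : Iio (1 : ℝ) ⊆ integrableExpSet id (gammaMeasure a 1) := by
    intro t ht
    -- A non-integrable exponential would have Bochner integral `0`, but the mgf is positive.
    by_contra hn
    have h0 : mgf id (gammaMeasure a 1) t = 0 := integral_undef hn
    rw [mgf_gammaMeasure_one ha ht] at h0
    have : 0 < 1 - t := by simpa using ht
    exact (Real.rpow_pos_of_pos (one_div_pos.2 this) a).ne' h0
  have hf : AnalyticOnNhd ℂ (complexMGF id (gammaMeasure a 1)) {z | z.re < 1} :=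
    analyticOnNhd_complexMGF.mono fun z hz => interior_maximal hsub isOpen_Iio hz
  have hopen : IsOpen {z : ℂ | z.re < 1} := isOpen_Iio.preimage Complex.continuous_re
  have hg : AnalyticOnNhd ℂ (fun z : ℂ => (1 / (1 - z)) ^ (a : ℂ)) {z | z.re < 1} := by
    refine DifferentiableOn.analyticOnNhd (fun z hz => ?_) hopen
    have hz' : 0 < (1 - z).re := by simpa using hz
    have hne : 1 - z ≠ 0 := fun h => by simp [h] at hz'
    refine DifferentiableAt.differentiableWithinAt ?_
    refine DifferentiableAt.cpow_const ?_ ?_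
    · exact (differentiableAt_const _).div (by fun_prop) hne
    · left
      rw [one_div, Complex.inv_re]
      exact div_pos hz' (Complex.normSq_pos.2 hne)
  refine hf.eqOn_of_preconnected_of_frequently_eq hg
    (convex_halfSpace_re_lt 1).isPreconnected (z₀ := 0) (by simp) ?_ hz
  have hT : Tendsto (fun t : ℝ => (t : ℂ)) (𝓝[≠] 0) (𝓝[≠] 0) := by
    refine tendsto_nhdsWithin_iff.2 ⟨?_, ?_⟩
    · exact (Complex.continuous_ofReal.tendsto' 0 0 (by simp)).mono_left nhdsWithin_le_nhds
    · filter_upwards [self_mem_nhdsWithin] with t ht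
      simpa using ht
  refine hT.frequently (Eventually.frequently ?_)
  filter_upwards [nhdsWithin_le_nhds (Iio_mem_nhds one_pos)] with t ht
  have h1 : 0 < 1 - t := by simpa using ht
  rw [complexMGF_ofReal, mgf_gammaMeasure_one ha ht, Complex.ofReal_cpow (by positivity)]
  push_cast
  rfl

/-- Polar form of the transform: `1 / (1 + i tan v) = cos v * exp (-i v)` with `|v| < π / 2`, so the
principal power multiplies the argument by `a`. -/
lemma one_div_one_add_mul_I_cpow (a t : ℝ) :
    (1 / (1 + t * Complex.I)) ^ (a : ℂ) =
      (Real.cos (Real.arctan t) ^ a : ℝ) * Complex.exp (-(a * Real.arctan t) * Complex.I) := by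
  set v := Real.arctan t with hv
  have hc : 0 < Real.cos v := Real.cos_arctan_pos t
  have h1 := Real.neg_pi_div_two_lt_arctan t
  have h2 := Real.arctan_lt_pi_div_two t
  have hlog : 1 / (1 + t * Complex.I) =
      Complex.exp ((Real.log (Real.cos v) : ℝ) + (-v : ℝ) * Complex.I) := by
    have ht : t = Real.sin v / Real.cos v := by
      rw [← Real.tan_eq_sin_div_cos, hv, Real.tan_arctan]
    have hne : (1 : ℂ) + t * Complex.I ≠ 0 := fun h => by
      simpa using congrArg Complex.re h
    rw [Complex.exp_add, ← Complex.ofReal_exp, Real.exp_log hc, Complex.exp_mul_I,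
      ← Complex.ofReal_cos, ← Complex.ofReal_sin, div_eq_iff hne, Real.cos_neg, Real.sin_neg]
    rw [ht]
    have hc' : (Real.cos v : ℂ) ≠ 0 := by exact_mod_cast hc.ne'
    have hsc : (Real.sin v : ℂ) ^ 2 + (Real.cos v : ℂ) ^ 2 = 1 := by
      exact_mod_cast Real.sin_sq_add_cos_sq v
    rw [Complex.ofReal_div, Complex.ofReal_neg]
    generalize (Real.cos v : ℂ) = c at *
    generalize (Real.sin v : ℂ) = s at *
    field_simp
    linear_combination -hsc + s ^ 2 * Complex.I_sq
  rw [hlog, Complex.cpow_def_of_ne_zero (Complex.exp_ne_zero _), Complex.log_exp,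
    Real.rpow_def_of_pos hc, Complex.ofReal_exp, ← Complex.exp_add]
  · congr 1
    push_cast
    ring
  all_goals simp; linarith [Real.pi_pos]

open ProbabilityTheory Set Filter Topology FourierTransform in
/-- Fourier inversion for the Gamma density at a positive point. -/
lemma integral_exp_mul_cpow {α x : ℝ} (hα : 0 < α) (hx : 0 < x) :
    ∫ t : ℝ, Complex.exp (x * t * Complex.I) * (1 / (1 + t * Complex.I)) ^ ((α + 1 : ℝ) : ℂ) =
      2 * Real.pi * gammaPDFReal (α + 1) 1 x := by
  have ha : 0 < α + 1 := by linarith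
  have hπ := Real.pi_pos
  set f : ℝ → ℂ := fun x => (gammaPDFReal (α + 1) 1 x : ℂ) with hfdef
  have hF : ∀ w : ℝ, 𝓕 f w =
      (1 / (1 + ((2 * Real.pi * w : ℝ) : ℂ) * Complex.I)) ^ ((α + 1 : ℝ) : ℂ) := by
    intro w
    have := complexMGF_gammaMeasure_one ha (z := -((2 * Real.pi * w : ℝ) : ℂ) * Complex.I)
      (by simp)
    rw [complexMGF, integral_gammaMeasure_one ha] at this
    rw [Real.fourier_eq']
    convert! this using 1
    · congr with v
      simp [hfdef, mul_comm]
      left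
      ring_nf
    · congr 2
      ring
  have hf : Integrable f := by
    have : IsProbabilityMeasure (gammaMeasure (α + 1) 1) :=
      isProbabilityMeasure_gammaMeasure ha one_pos
    refine Integrable.ofReal ?_
    by_contra hn
    have h1 := integral_gammaMeasure_one ha (fun _ => (1 : ℝ))
    have h2 : ∫ x, gammaPDFReal (α + 1) 1 x = 0 := integral_undef hn
    simp [h2] at h1
  have hFi : Integrable (𝓕 f) := by
    have h0 : Integrable fun t : ℝ => ((1 : ℝ) + ‖t‖ ^ 2) ^ (-(α + 1) / 2) :=
      integrable_rpow_neg_one_add_norm_sq (by simpa using hα)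
    have h1 := h0.comp_mul_left' (R := 2 * Real.pi) (by positivity)
    refine h1.mono' ?_ ?_
    · rw [funext hF]
      exact Measurable.aestronglyMeasurable (by fun_prop)
    · refine ae_of_all _ fun w => ?_
      rw [hF, one_div_one_add_mul_I_cpow, Real.cos_arctan, norm_mul,
        ← Complex.ofReal_mul, ← Complex.ofReal_neg, Complex.norm_exp_ofReal_mul_I, mul_one,
        Complex.norm_real, Real.norm_of_nonneg (by positivity), Real.norm_eq_abs, sq_abs,
        Real.sqrt_eq_rpow, one_div, ← Real.rpow_neg (by positivity),
        ← Real.rpow_mul (by positivity)]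
      apply le_of_eq
      congr 1
      ring
  have hc : ContinuousAt f x := by
    have h1 : ContinuousAt (fun y : ℝ => ((1 ^ (α + 1) / Real.Gamma (α + 1) * y ^ (α + 1 - 1) *
        Real.exp (-(1 * y)) : ℝ) : ℂ)) x := by
      refine Complex.continuous_ofReal.continuousAt.comp ?_
      refine (continuousAt_const.mul (Real.continuousAt_rpow_const _ _ (Or.inl hx.ne'))).mul ?_
      fun_prop
    refine h1.congr ?_
    filter_upwards [Ioi_mem_nhds hx] with y hy
    simp only [hfdef, gammaPDFReal, if_pos (le_of_lt (mem_Ioi.1 hy))]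
  have hinv := hf.fourierInv_fourier_eq hFi hc
  rw [Real.fourierInv_eq'] at hinv
  -- Rescale by `2 π` to pass from Mathlib's Fourier normalization to the kernel `exp (i x t)`.
  have hs := Measure.integral_comp_mul_left (fun t : ℝ => Complex.exp (x * t * Complex.I) *
    (1 / (1 + t * Complex.I)) ^ ((α + 1 : ℝ) : ℂ)) (2 * Real.pi)
  have he : ∫ v : ℝ, Complex.exp (x * ((2 * Real.pi * v : ℝ) : ℂ) * Complex.I) *
      (1 / (1 + ((2 * Real.pi * v : ℝ) : ℂ) * Complex.I)) ^ ((α + 1 : ℝ) : ℂ) = f x := by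
    rw [← hinv]
    congr with v
    rw [hF, smul_eq_mul]
    congr 2
    simp
    ring
  rw [he, abs_of_pos (by positivity)] at hs
  have hπ' : (Real.pi : ℂ) ≠ 0 := by exact_mod_cast hπ.ne'
  change _ = 2 * (Real.pi : ℂ) * f x
  rw [hs, Complex.real_smul, ← mul_assoc]
  push_cast
  rw [mul_inv_cancel₀ (mul_ne_zero two_ne_zero hπ'), one_mul]

open ProbabilityTheory in
lemma integral_cos_arctan {α x : ℝ} (hα : 0 < α) (hx : 0 < x) :
    ∫ t : ℝ, Real.cos (Real.arctan t) ^ (α + 1) *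
      Real.cos (x * t - (α + 1) * Real.arctan t) =
      2 * Real.pi * gammaPDFReal (α + 1) 1 x := by
  have h := integral_exp_mul_cpow hα hx
  have hpos : 0 < 2 * Real.pi * gammaPDFReal (α + 1) 1 x :=
    mul_pos Real.two_pi_pos (gammaPDFReal_pos (by linarith) one_pos hx)
  have hint : Integrable fun t : ℝ => Complex.exp (x * t * Complex.I) *
      (1 / (1 + t * Complex.I)) ^ ((α + 1 : ℝ) : ℂ) := by
    -- The integral is nonzero, whereas a non-integrable function has integral `0`.
    by_contra hn
    rw [integral_undef hn] at h
    exact hpos.ne (by exact_mod_cast h)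
  have h2 := Complex.reCLM.integral_comp_comm hint
  rw [h] at h2
  convert! h2 using 1
  · congr with t
    rw [one_div_one_add_mul_I_cpow, mul_left_comm, ← Complex.exp_add]
    have : (x * t * Complex.I + -(((α + 1 : ℝ) : ℂ) * Real.arctan t) * Complex.I : ℂ) =
        ((x * t - (α + 1) * Real.arctan t : ℝ) : ℂ) * Complex.I := by
      push_cast; ring
    rw [this, Complex.reCLM_apply, Complex.re_ofReal_mul, Complex.exp_ofReal_mul_I_re]
  · rw [Complex.reCLM_apply]
    exact_mod_cast (Complex.ofReal_re _).symm

open Set in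
lemma image_arctan_Ioi : Real.arctan '' Ioi 0 = Ioo 0 (Real.pi / 2) := by
  ext v
  constructor
  · rintro ⟨t, ht, rfl⟩
    exact ⟨Real.arctan_pos.2 ht, Real.arctan_lt_pi_div_two t⟩
  · rintro ⟨h0, h1⟩
    exact ⟨Real.tan v, Real.tan_pos_of_pos_of_lt_pi_div_two h0 h1,
      Real.arctan_tan (by linarith [Real.pi_pos]) h1⟩

/-- ∫₀^{π/2} cos^{α−1}v · cos(x·tan v − (α+1)v) dv = π·x^α·e^{−x}/Γ(α+1). -/
theorem kummer_laplace_integral (α x : ℝ) (hx : 0 < x) (hα : 0 < α) :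
    ∫ v in (0 : ℝ)..(Real.pi / 2),
        Real.cos v ^ (α - 1) * Real.cos (x * Real.tan v - (α + 1) * v)
      = Real.pi * x ^ α * Real.exp (-x) / Real.Gamma (α + 1) := by
  set F : ℝ → ℝ := fun t => Real.cos (Real.arctan t) ^ (α + 1) *
    Real.cos (x * t - (α + 1) * Real.arctan t) with hF
  have heven : ∀ t, F |t| = F t := fun t => by
    rcases abs_choice t with h | h
    · rw [h]
    · simp only [h, hF, Real.arctan_neg, Real.cos_neg]
      rw [← Real.cos_neg (x * t - _)]
      congr 2
      ring
  have hhalf : 2 * ∫ t in Set.Ioi 0, F t =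
      2 * Real.pi * ProbabilityTheory.gammaPDFReal (α + 1) 1 x := by
    rw [← integral_comp_abs, ← integral_cos_arctan hα hx]
    simp only [heven]
    rfl
  have hsub := integral_image_eq_integral_abs_deriv_smul (measurableSet_Ioi (a := (0 : ℝ)))
    (fun t _ => (Real.hasDerivAt_arctan' t).hasDerivWithinAt) Real.arctan_injective.injOn
    (fun v => Real.cos v ^ (α - 1) * Real.cos (x * Real.tan v - (α + 1) * v))
  have hcongr : (fun t : ℝ => |(1 + t ^ 2)⁻¹| • (Real.cos (Real.arctan t) ^ (α - 1) *
      Real.cos (x * Real.tan (Real.arctan t) - (α + 1) * Real.arctan t))) = F := by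
    ext t
    have hc := Real.cos_arctan_pos t
    rw [abs_of_pos (by positivity), ← one_div, ← Real.cos_sq_arctan, Real.tan_arctan,
      smul_eq_mul, ← mul_assoc, ← Real.rpow_natCast, ← Real.rpow_add hc]
    simp only [hF]
    congr 2
    push_cast
    ring
  rw [hcongr, image_arctan_Ioi] at hsub
  rw [integral_of_le (by positivity), integral_Ioc_eq_integral_Ioo, hsub]
  rw [ProbabilityTheory.gammaPDFReal, if_pos hx.le] at hhalf
  simp only [Real.one_rpow, add_sub_cancel_right, one_mul] at hhalf
  rw [mul_assoc 2, mul_right_inj' two_ne_zero] at hhalf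
  rw [hhalf]
  ring
end

section
/- For every real x > 0 and every real α > 0, ∫₀^{π/2} cos^{α−1}(v) · cos(x·tan v + (α+1)v) dv = 0. -/
open MeasureTheory intervalIntegral

/-!
With `t = tan v` the integral becomes the real part of
`∫ t in Ioi 0, e^{-ixt} (1 + it)^{-(α+1)}`, because `1 / (1 + i tan v) = cos v · e^{-iv}`
(`base_cpow`). That real part is even in `t`, so it suffices that the integral over the whole line
vanishes. The function `(1 + it)^{-(α+1)}` is the Fourier transform of the density
`s^α e^{-s} / Γ(α+1)` of the gamma distribution on `(0, ∞)` (`fourier_gammaPDFReal`), and it is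
integrable since `α > 0`. Fourier inversion therefore identifies the integral over the line, up to
a constant factor, with the value of that density at `-x < 0`, which is zero
(`integral_line_eq_zero`).

The Fourier transform of the gamma density is obtained from its moment generating function on
the reals `t < 1`, where it is Euler's integral, by analytic continuation to the half-plane
`re z < 1` (`complexMGF_gammaMeasure`).
-/

open ProbabilityTheory

/-- Polar form of the principal power of `1 / (1 + it) = cos θ · e^{-iθ}`, where `θ = arctan t`. -/
theorem base_cpow (α t : ℝ) :
    (1 / (1 + (t : ℂ) * Complex.I)) ^ ((α : ℂ) + 1) =
      ((Real.cos (Real.arctan t) ^ (α + 1) : ℝ) : ℂ) *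
        Complex.exp (-(((α + 1) * Real.arctan t : ℝ) * Complex.I)) := by
  have hc : 0 < Real.cos (Real.arctan t) := Real.cos_arctan_pos t
  have hc' : ((Real.cos (Real.arctan t) : ℝ) : ℂ) ≠ 0 := by exact_mod_cast hc.ne'
  have hne : (1 + (t : ℂ) * Complex.I) ≠ 0 := by
    intro h
    have := congrArg Complex.re h
    simp at this
  have key : 1 / (1 + (t : ℂ) * Complex.I) =
      Complex.exp (((Real.log (Real.cos (Real.arctan t)) : ℝ) : ℂ)
        + ((-Real.arctan t : ℝ) : ℂ) * Complex.I) := by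
    rw [Complex.exp_add, ← Complex.ofReal_exp, Real.exp_log hc, div_eq_iff hne,
      Complex.exp_mul_I, ← Complex.ofReal_cos, ← Complex.ofReal_sin, Real.cos_neg, Real.sin_neg]
    have ht : Real.sin (Real.arctan t) = t * Real.cos (Real.arctan t) := by
      conv_rhs => rw [← Real.tan_arctan t, Real.arctan_tan (Real.neg_pi_div_two_lt_arctan t) (Real.arctan_lt_pi_div_two t)]
      rw [Real.tan_mul_cos hc.ne']
    have hsq := Real.sin_sq_add_cos_sq (Real.arctan t)
    rw [ht] at hsq ⊢
    generalize Real.cos (Real.arctan t) = c at hsq ⊢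
    apply Complex.ext
    · simp only [Complex.one_re, Complex.mul_re, Complex.add_re, Complex.add_im, Complex.mul_im,
        Complex.ofReal_re, Complex.ofReal_im, Complex.I_re, Complex.I_im, Complex.one_im]
      linear_combination -hsq
    · simp only [Complex.one_re, Complex.mul_re, Complex.add_re, Complex.add_im, Complex.mul_im,
        Complex.ofReal_re, Complex.ofReal_im, Complex.I_re, Complex.I_im, Complex.one_im]
      ring
  rw [key, Complex.cpow_def_of_ne_zero (Complex.exp_ne_zero _), Complex.log_exp]
  · rw [Real.rpow_def_of_pos hc, Complex.ofReal_exp, ← Complex.exp_add]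
    congr 1
    push_cast
    ring
  · simp only [Complex.add_im, Complex.ofReal_im, Complex.mul_I_im, Complex.ofReal_re]
    linarith [Real.arctan_lt_pi_div_two t, Real.pi_pos]
  · simp only [Complex.add_im, Complex.ofReal_im, Complex.mul_I_im, Complex.ofReal_re]
    linarith [Real.neg_pi_div_two_lt_arctan t, Real.pi_pos]


theorem integral_gammaMeasure_exp (a : ℝ) (ha : 0 < a) (z : ℂ) :
    complexMGF id (gammaMeasure a 1) z =
      ∫ s : ℝ, (gammaPDFReal a 1 s : ℂ) * Complex.exp (z * s) := by
  rw [complexMGF, gammaMeasure, integral_withDensity_eq_integral_toReal_smul]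
  · refine integral_congr_ae (Filter.Eventually.of_forall fun s => ?_)
    simp only [gammaPDF, ENNReal.toReal_ofReal (gammaPDFReal_nonneg ha one_pos s), id,
      Complex.real_smul]
  · exact (measurable_gammaPDFReal a 1).ennreal_ofReal
  · exact Filter.Eventually.of_forall fun s => ENNReal.ofReal_lt_top

/-- The two sides can differ only at `0`, where `gammaPDFReal a 1` is given by the power `0 ^ (a - 1)`. -/
theorem gammaPDFReal_mul_exp_ae (a t : ℝ) :
    (fun s : ℝ => gammaPDFReal a 1 s * Real.exp (t * s)) =ᵐ[volume]
      (Set.Ioi 0).indicator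
        (fun s => 1 / Real.Gamma a * (s ^ (a - 1) * Real.exp (-((1 - t) * s)))) := by
  filter_upwards [compl_mem_ae_iff.mpr (measure_singleton (0 : ℝ))] with s hs
  rcases lt_or_gt_of_ne (show s ≠ 0 from hs) with h | h
  · simp [gammaPDFReal, not_le.mpr h, h.le]
  · rw [Set.indicator_of_mem (show s ∈ Set.Ioi 0 from h), gammaPDFReal, if_pos h.le,
      show -((1 - t) * s) = -(1 * s) + t * s by ring, Real.exp_add, Real.one_rpow]
    ring

theorem integrable_gammaPDFReal_mul_exp (a t : ℝ) (ha : 0 < a) (ht : t < 1) :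
    Integrable (fun s : ℝ => gammaPDFReal a 1 s * Real.exp (t * s)) := by
  rw [integrable_congr (gammaPDFReal_mul_exp_ae a t), integrable_indicator_iff measurableSet_Ioi]
  have := integrableOn_rpow_mul_exp_neg_mul_rpow (p := 1) (s := a - 1) (b := 1 - t)
    (by linarith) one_pos (by linarith)
  simp only [Real.rpow_one, neg_mul] at this
  exact this.const_mul _

theorem integrableExp_gammaMeasure (a t : ℝ) (ha : 0 < a) (ht : t < 1) :
    t ∈ integrableExpSet id (gammaMeasure a 1) := by
  have h := integrable_gammaPDFReal_mul_exp a t ha ht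
  change Integrable (fun s : ℝ => Real.exp (t * id s)) (gammaMeasure a 1)
  rw [gammaMeasure, integrable_withDensity_iff_integrable_smul'
      (f := gammaPDF a 1) (measurable_gammaPDFReal a 1).ennreal_ofReal
      (Filter.Eventually.of_forall fun s => ENNReal.ofReal_lt_top)]
  refine h.congr (Filter.Eventually.of_forall fun s => ?_)
  simp only [gammaPDF, ENNReal.toReal_ofReal (gammaPDFReal_nonneg ha one_pos s), id, smul_eq_mul]

theorem integral_gammaPDFReal_mul_exp (a t : ℝ) (ha : 0 < a) (ht : t < 1) :
    ∫ s : ℝ, gammaPDFReal a 1 s * Real.exp (t * s) = (1 / (1 - t)) ^ a := by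
  rw [integral_congr_ae (gammaPDFReal_mul_exp_ae a t), MeasureTheory.integral_indicator measurableSet_Ioi,
    MeasureTheory.integral_const_mul, Real.integral_rpow_mul_exp_neg_mul_Ioi ha (by linarith)]
  have := (Real.Gamma_pos_of_pos ha).ne'
  field_simp

/-- Both sides are holomorphic on `re z < 1` and agree at the real points, hence everywhere on that
half-plane. -/
theorem complexMGF_gammaMeasure (a : ℝ) (ha : 0 < a) (z : ℂ) (hz : z.re < 1) :
    complexMGF id (gammaMeasure a 1) z = (1 / (1 - z)) ^ (a : ℂ) := by
  have hopen : IsOpen {z : ℂ | z.re < 1} := isOpen_lt Complex.continuous_re continuous_const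
  have hsub : ∀ t : ℝ, t < 1 → t ∈ interior (integrableExpSet id (gammaMeasure a 1)) := fun t ht =>
    interior_maximal (s := integrableExpSet id (gammaMeasure a 1)) (t := Set.Iio 1)
      (fun t ht => integrableExp_gammaMeasure a t ha ht) isOpen_Iio ht
  have h1 : AnalyticOnNhd ℂ (complexMGF id (gammaMeasure a 1)) {z : ℂ | z.re < 1} :=
    analyticOnNhd_complexMGF.mono fun z hz => hsub _ hz
  have h2 : AnalyticOnNhd ℂ (fun z : ℂ => (1 / (1 - z)) ^ (a : ℂ)) {z : ℂ | z.re < 1} := by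
    refine DifferentiableOn.analyticOnNhd (fun z hz => ?_) hopen
    have hre : 0 < (1 - z).re := by simpa using hz
    have hne : 1 - z ≠ 0 := fun h => by rw [h] at hre; simp at hre
    refine (DifferentiableAt.cpow ?_ (differentiableAt_const _) ?_).differentiableWithinAt
    · exact (differentiableAt_const _).div (by fun_prop) hne
    · left
      rw [one_div, Complex.inv_re]
      exact div_pos hre (Complex.normSq_pos.mpr hne)
  have hconv : IsPreconnected {z : ℂ | z.re < 1} := (convex_halfSpace_re_lt 1).isPreconnected
  have hreal : ∀ t : ℝ, t < 1 →
      complexMGF id (gammaMeasure a 1) t = (1 / (1 - (t : ℂ))) ^ (a : ℂ) := by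
    intro t ht
    rw [integral_gammaMeasure_exp a ha]
    have h := congrArg (fun r : ℝ => (r : ℂ)) (integral_gammaPDFReal_mul_exp a t ha ht)
    rw [← integral_complex_ofReal, Complex.ofReal_cpow (by
      have : 0 < 1 - t := by linarith
      positivity)] at h
    push_cast at h
    exact h
  refine h1.eqOn_of_preconnected_of_frequently_eq h2 hconv (z₀ := 0) (by simp) ?_ hz
  -- the two functions agree at the nonzero reals `t < 1`, which accumulate at `0`
  have hreal' : ∃ᶠ t : ℝ in nhdsWithin 0 {0}ᶜ, t < 1 :=
    ((gt_mem_nhds (zero_lt_one' ℝ)).filter_mono nhdsWithin_le_nhds).frequently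
  have htend : Filter.Tendsto (fun t : ℝ => (t : ℂ)) (nhdsWithin 0 {0}ᶜ) (nhdsWithin 0 {0}ᶜ) := by
    refine tendsto_nhdsWithin_of_tendsto_nhds_of_eventually_within _ ?_ ?_
    · exact (Complex.continuous_ofReal.tendsto' 0 0 (by simp)).mono_left nhdsWithin_le_nhds
    · filter_upwards [self_mem_nhdsWithin] with t ht
      simpa using ht
  exact htend.frequently (hreal'.mono fun t ht => hreal t ht)

theorem fourier_gammaPDFReal (a : ℝ) (ha : 0 < a) (w : ℝ) :
    FourierTransform.fourier (fun s : ℝ => (gammaPDFReal a 1 s : ℂ)) w =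
      (1 / (1 + ((2 * Real.pi * w : ℝ) : ℂ) * Complex.I)) ^ (a : ℂ) := by
  have h := complexMGF_gammaMeasure a ha (-(((2 * Real.pi * w : ℝ) : ℂ) * Complex.I)) (by simp)
  rw [integral_gammaMeasure_exp a ha, sub_neg_eq_add] at h
  rw [← h, Real.fourier_real_eq_integral_exp_smul]
  refine integral_congr_ae (Filter.Eventually.of_forall fun s => ?_)
  simp only [smul_eq_mul]
  rw [mul_comm]
  congr 2
  push_cast
  ring

/-- The decay `|1 + it|^{-(α+1)}`, written in the form whose integrability Mathlib provides. -/
theorem norm_base_cpow (α t : ℝ) :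
    ‖(1 / (1 + (t : ℂ) * Complex.I)) ^ ((α : ℂ) + 1)‖ = (1 + ‖t‖ ^ 2) ^ (-(α + 1) / 2) := by
  have h : (0 : ℝ) < 1 + t ^ 2 := by positivity
  rw [base_cpow, norm_mul, ← neg_mul, ← Complex.ofReal_neg, Complex.norm_exp_ofReal_mul_I, mul_one,
    Complex.norm_real, Real.norm_of_nonneg (Real.rpow_nonneg (Real.cos_arctan_pos t).le _),
    Real.cos_arctan, one_div, Real.sqrt_eq_rpow, ← Real.rpow_neg h.le, ← Real.rpow_mul h.le,
    Real.norm_eq_abs, sq_abs]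
  congr 1
  ring

/-- Fourier inversion for the gamma density at the point `-x`, where the density vanishes
identically nearby. Integrability is included because the real part of the integral is taken
afterwards. -/
theorem integral_line_eq_zero (α x : ℝ) (hx : 0 < x) (hα : 0 < α) :
    ∫ t : ℝ, Complex.exp (-((x * t : ℝ) * Complex.I)) *
      (1 / (1 + (t : ℂ) * Complex.I)) ^ ((α : ℂ) + 1) = 0 ∧
    Integrable (fun t : ℝ => Complex.exp (-((x * t : ℝ) * Complex.I)) *
      (1 / (1 + (t : ℂ) * Complex.I)) ^ ((α : ℂ) + 1)) := by
  have hα1 : 0 < α + 1 := by linarith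
  have hcont : Continuous fun t : ℝ => (1 / (1 + (t : ℂ) * Complex.I)) ^ ((α : ℂ) + 1) := by
    simp_rw [base_cpow]
    have : Continuous fun t : ℝ => Real.cos (Real.arctan t) ^ (α + 1) :=
      (Real.continuous_cos.comp Real.continuous_arctan).rpow_const fun _ => Or.inr hα1.le
    fun_prop
  have hint : Integrable fun t : ℝ => (1 / (1 + (t : ℂ) * Complex.I)) ^ ((α : ℂ) + 1) := by
    have := integrable_rpow_neg_one_add_norm_sq (E := ℝ) (μ := volume) (r := α + 1) (by simpa)
    refine this.mono' hcont.aestronglyMeasurable (Filter.Eventually.of_forall fun t => ?_)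
    exact (norm_base_cpow α t).le
  have hF : FourierTransform.fourier (fun s : ℝ => (gammaPDFReal (α + 1) 1 s : ℂ)) =
      fun w => (1 / (1 + ((2 * Real.pi * w : ℝ) : ℂ) * Complex.I)) ^ ((α : ℂ) + 1) := by
    ext w
    rw [fourier_gammaPDFReal _ hα1]
    push_cast
    rfl
  have hfint : Integrable (fun s : ℝ => (gammaPDFReal (α + 1) 1 s : ℂ)) := by
    simpa using (integrable_gammaPDFReal_mul_exp (α + 1) 0 hα1 one_pos).ofReal (𝕜 := ℂ)
  have hpi : (2 * Real.pi) ≠ 0 := by positivity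
  have hev : (fun s : ℝ => (gammaPDFReal (α + 1) 1 s : ℂ)) =ᶠ[nhds (-x)] fun _ => 0 := by
    filter_upwards [gt_mem_nhds (show -x < 0 by linarith)] with s hs
    simp [gammaPDFReal, not_le.mpr hs]
  have hinv := hfint.fourierInv_fourier_eq (v := -x)
    (by rw [hF]; exact hint.comp_mul_left' hpi) (continuousAt_const.congr hev.symm)
  rw [hev.eq_of_nhds, hF, Real.fourierInv_eq'] at hinv
  constructor
  · -- rescale `t = 2πw` to pass from the frequency variable of the Fourier transform
    have hsub := Measure.integral_comp_mul_left (fun t : ℝ =>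
      Complex.exp (-((x * t : ℝ) * Complex.I)) *
        (1 / (1 + (t : ℂ) * Complex.I)) ^ ((α : ℂ) + 1)) (2 * Real.pi)
    have hz : ∫ w : ℝ, Complex.exp (-((x * (2 * Real.pi * w) : ℝ) * Complex.I)) *
        (1 / (1 + ((2 * Real.pi * w : ℝ) : ℂ) * Complex.I)) ^ ((α : ℂ) + 1) = 0 := by
      rw [← hinv]
      refine integral_congr_ae (Filter.Eventually.of_forall fun w => ?_)
      simp only [smul_eq_mul, RCLike.inner_apply]
      congr 2
      simp
      ring
    rw [hz] at hsub
    exact (smul_eq_zero.mp hsub.symm).resolve_left (by positivity)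
  · refine hint.norm.mono' (Continuous.aestronglyMeasurable (by fun_prop)) ?_
    refine Filter.Eventually.of_forall fun t => ?_
    rw [norm_mul, ← neg_mul, ← Complex.ofReal_neg, Complex.norm_exp_ofReal_mul_I, one_mul]

/-- The real part of the integrand of `integral_line_eq_zero` is an even function of `t`, so its
integral over the half-line is half of zero. -/
theorem integral_half_line_eq_zero (α x : ℝ) (hx : 0 < x) (hα : 0 < α) :
    ∫ t in Set.Ioi (0 : ℝ), Real.cos (Real.arctan t) ^ (α + 1) *
      Real.cos (x * t + (α + 1) * Real.arctan t) = 0 := by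
  obtain ⟨h0, hint⟩ := integral_line_eq_zero α x hx hα
  have hre : ∀ t : ℝ, (Complex.exp (-((x * t : ℝ) * Complex.I)) *
      (1 / (1 + (t : ℂ) * Complex.I)) ^ ((α : ℂ) + 1)).re =
      Real.cos (Real.arctan t) ^ (α + 1) * Real.cos (x * t + (α + 1) * Real.arctan t) := by
    intro t
    rw [base_cpow, mul_left_comm, ← Complex.exp_add, Complex.re_ofReal_mul,
      show -(((x * t : ℝ) : ℂ) * Complex.I) + -((((α + 1) * Real.arctan t : ℝ) : ℂ) * Complex.I) =
        ((-(x * t + (α + 1) * Real.arctan t) : ℝ) : ℂ) * Complex.I by push_cast; ring,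
      Complex.exp_ofReal_mul_I_re, Real.cos_neg]
  have heven : ∀ t : ℝ, Real.cos (Real.arctan |t|) ^ (α + 1) *
      Real.cos (x * |t| + (α + 1) * Real.arctan |t|) =
      Real.cos (Real.arctan t) ^ (α + 1) * Real.cos (x * t + (α + 1) * Real.arctan t) := by
    intro t
    rcases abs_choice t with h | h
    · rw [h]
    · rw [h, Real.arctan_neg, Real.cos_neg,
        show x * -t + (α + 1) * -Real.arctan t = -(x * t + (α + 1) * Real.arctan t) by ring,
        Real.cos_neg]
  have h := integral_comp_abs (f := fun t => Real.cos (Real.arctan t) ^ (α + 1) *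
      Real.cos (x * t + (α + 1) * Real.arctan t))
  simp only [heven] at h
  have hz := integral_re hint
  simp only [RCLike.re_eq_complex_re, hre, h0, Complex.zero_re] at hz
  linarith

/-- ∫₀^{π/2} cos^{α−1}v · cos(x·tan v + (α+1)v) dv = 0. -/
theorem kummer_vanishing_integral (α x : ℝ) (hx : 0 < x) (hα : 0 < α) :
    ∫ v in (0 : ℝ)..(Real.pi / 2),
        Real.cos v ^ (α - 1) * Real.cos (x * Real.tan v + (α + 1) * v) = 0 := by
  have hpi := Real.pi_pos
  have himg : Real.tan '' Set.Ioo 0 (Real.pi / 2) = Set.Ioi 0 := by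
    ext t
    constructor
    · rintro ⟨v, hv, rfl⟩
      exact Real.tan_pos_of_pos_of_lt_pi_div_two hv.1 hv.2
    · intro ht
      exact ⟨Real.arctan t, ⟨Real.arctan_pos.mpr ht, Real.arctan_lt_pi_div_two t⟩,
        Real.tan_arctan t⟩
  have hsub : Set.Ioo 0 (Real.pi / 2) ⊆ Set.Ioo (-(Real.pi / 2)) (Real.pi / 2) :=
    Set.Ioo_subset_Ioo_left (neg_nonpos.mpr (half_pos hpi).le)
  have h := integral_half_line_eq_zero α x hx hα
  rw [← himg, integral_image_eq_integral_abs_deriv_smul measurableSet_Ioo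
    (fun v hv => (Real.hasDerivAt_tan_of_mem_Ioo (hsub hv)).hasDerivWithinAt)
    (Real.injOn_tan.mono hsub)] at h
  rw [intervalIntegral.integral_of_le (by linarith), integral_Ioc_eq_integral_Ioo]
  refine (setIntegral_congr_fun measurableSet_Ioo fun v hv => ?_).trans h
  have hc : 0 < Real.cos v := Real.cos_pos_of_mem_Ioo (hsub hv)
  have hsq : 0 < 1 / Real.cos v ^ 2 := by positivity
  simp only [smul_eq_mul]
  rw [Real.arctan_tan (hsub hv).1 (hsub hv).2, abs_of_pos hsq,
    show α + 1 = (α - 1) + 2 by ring, Real.rpow_add hc, Real.rpow_two]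
  field_simp
end

section
/- For every real x > 0 and every real α > 0, (2·Γ(α+1/2)/√π) · ∫₀^{π/2} cos^{2α−1}(v) · cos(2√x · tan v) dv = ∫₀^∞ u^{α−1} e^{−u} e^{−x/u} du. -/
/-!
The substitution `t = tan v` turns the cosine integral into the Fourier-type integral
`∫₀^∞ (1 + t²)^(-(α + 1/2)) cos (2√x t) dt`. Writing
`Γ(α + 1/2) (1 + t²)^(-(α + 1/2)) = ∫₀^∞ u^(α - 1/2) e^(-(1 + t²) u) du` gives a double integral;
it converges absolutely, since `(1 + t²)^(-(α + 1/2))` is integrable for `α > 0`. By Fubini one may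
integrate in `t` first, and the Gaussian cosine transform
`∫₀^∞ e^(-u t²) cos (2√x t) dt = (√π / 2) u^(-1/2) e^(-x/u)` yields the Laplace-type integral.
-/

open MeasureTheory intervalIntegral

lemma integral_Ioi_exp_neg_mul_sq_mul_cos {u : ℝ} (hu : 0 < u) (c : ℝ) :
    ∫ t in Set.Ioi (0 : ℝ), Real.exp (-(u * t ^ 2)) * Real.cos (c * t)
      = √(Real.pi / u) / 2 * Real.exp (-(c ^ 2 / (4 * u))) := by
  have key := fourierIntegral_gaussian (b := (u : ℂ)) (by simpa using hu) (c : ℂ)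
  have hval : ((Real.pi : ℂ) / u) ^ (1 / 2 : ℂ) * Complex.exp (-(c : ℂ) ^ 2 / (4 * u))
      = ((√(Real.pi / u) * Real.exp (-(c ^ 2 / (4 * u))) : ℝ) : ℂ) := by
    rw [Real.sqrt_eq_rpow]
    push_cast [Complex.ofReal_cpow (div_pos Real.pi_pos hu).le]
    rw [neg_div]
  rw [hval] at key
  have hpos : 0 < √(Real.pi / u) * Real.exp (-(c ^ 2 / (4 * u))) := by positivity
  -- The value of the Fourier integral is nonzero, so its integrand is integrable.
  have hint := MeasureTheory.Integrable.of_integral_ne_zero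
    (by rw [key]; exact_mod_cast hpos.ne')
  have hre := integral_re hint
  rw [key] at hre
  have h2 := integral_comp_abs (f := fun t => Real.exp (-(u * t ^ 2)) * Real.cos (c * t))
  have h3 : ∀ t : ℝ, RCLike.re (Complex.exp (Complex.I * c * t) * Complex.exp (-u * (t : ℂ) ^ 2))
      = Real.exp (-(u * |t| ^ 2)) * Real.cos (c * |t|) := by
    intro t
    have h4 : Real.cos (c * |t|) = Real.cos (c * t) := by
      rcases abs_choice t with h | h <;> simp [h]
    rw [h4, sq_abs, ← Complex.exp_add]
    simp [Complex.exp_re, ← Complex.ofReal_pow]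
  simp only [h3] at hre
  rw [h2] at hre
  simp only [RCLike.re_eq_complex_re, Complex.ofReal_re] at hre
  linarith

lemma integral_cos_rpow_mul_cos_tan (α c : ℝ) :
    ∫ v in (0 : ℝ)..(Real.pi / 2), Real.cos v ^ (2 * α - 1) * Real.cos (c * Real.tan v)
      = ∫ t in Set.Ioi (0 : ℝ), (1 / (1 + t ^ 2)) ^ (α + 1 / 2) * Real.cos (c * t) := by
  have himg : Real.arctan '' Set.Ioi 0 = Set.Ioo 0 (Real.pi / 2) := by
    ext v
    constructor
    · rintro ⟨t, ht, rfl⟩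
      exact ⟨Real.arctan_pos.2 ht, Real.arctan_lt_pi_div_two t⟩
    · rintro ⟨h0, h1⟩
      exact ⟨Real.tan v, Real.tan_pos_of_pos_of_lt_pi_div_two h0 h1,
        Real.arctan_tan (by linarith) h1⟩
  rw [intervalIntegral.integral_of_le (by positivity), integral_Ioc_eq_integral_Ioo, ← himg,
    integral_image_eq_integral_abs_deriv_smul measurableSet_Ioi
      (fun t _ => (Real.hasDerivAt_arctan t).hasDerivWithinAt) Real.arctan_injective.injOn]
  refine setIntegral_congr_fun measurableSet_Ioi fun t _ => ?_
  have hp : 0 < 1 / (1 + t ^ 2) := by positivity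
  simp only [Real.tan_arctan, smul_eq_mul]
  rw [abs_of_pos hp, ← mul_assoc]
  congr 1
  have hc : Real.cos (Real.arctan t) = (1 / (1 + t ^ 2)) ^ (1 / 2 : ℝ) := by
    rw [← Real.sqrt_eq_rpow, ← Real.cos_sq_arctan, Real.sqrt_sq (Real.cos_arctan_pos t).le]
  rw [hc, ← Real.rpow_mul hp.le]
  nth_rewrite 1 [← Real.rpow_one (1 / (1 + t ^ 2))]
  rw [← Real.rpow_add hp]
  congr 1
  ring

/-- Absolute convergence of the double integral behind the exchange of the `t`- and
`u`-integrations. -/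
lemma integrable_uncurry_rpow_mul_exp_mul_cos {α : ℝ} (hα : 0 < α) (c : ℝ) :
    Integrable (Function.uncurry fun t u : ℝ =>
        u ^ (α + 1 / 2 - 1) * Real.exp (-((1 + t ^ 2) * u)) * Real.cos (c * t))
      ((volume.restrict (Set.Ioi 0)).prod (volume.restrict (Set.Ioi 0))) := by
  have ha : 0 < α + 1 / 2 := by linarith
  have hg : Integrable (Function.uncurry fun t u : ℝ =>
        u ^ (α + 1 / 2 - 1) * Real.exp (-((1 + t ^ 2) * u)))
      ((volume.restrict (Set.Ioi 0)).prod (volume.restrict (Set.Ioi 0))) := by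
    have hm : Measurable (Function.uncurry fun t u : ℝ =>
        u ^ (α + 1 / 2 - 1) * Real.exp (-((1 + t ^ 2) * u))) := by
      unfold Function.uncurry
      fun_prop
    rw [integrable_prod_iff hm.aestronglyMeasurable]
    have hI : ∀ t : ℝ, ∫ u in Set.Ioi (0 : ℝ),
        u ^ (α + 1 / 2 - 1) * Real.exp (-((1 + t ^ 2) * u))
          = (1 / (1 + t ^ 2)) ^ (α + 1 / 2) * Real.Gamma (α + 1 / 2) := fun t =>
      Real.integral_rpow_mul_exp_neg_mul_Ioi ha (by positivity)
    constructor
    · refine Filter.Eventually.of_forall fun t => ?_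
      refine MeasureTheory.Integrable.of_integral_ne_zero ?_
      simp only [Function.uncurry]
      rw [hI]
      have := Real.Gamma_pos_of_pos ha
      positivity
    · have hn : ∀ t : ℝ, ∫ u in Set.Ioi (0 : ℝ), ‖Function.uncurry (fun t u : ℝ =>
          u ^ (α + 1 / 2 - 1) * Real.exp (-((1 + t ^ 2) * u))) (t, u)‖
            = (1 + ‖t‖ ^ 2) ^ (-(2 * α + 1) / 2) * Real.Gamma (α + 1 / 2) := by
        intro t
        rw [Real.norm_eq_abs, sq_abs, neg_div, Real.rpow_neg (by positivity),
          ← Real.inv_rpow (by positivity), ← one_div,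
          show (2 * α + 1) / 2 = α + 1 / 2 by ring, ← hI]
        refine setIntegral_congr_fun measurableSet_Ioi fun u hu => ?_
        have hu : 0 < u := hu
        exact Real.norm_of_nonneg (mul_nonneg (Real.rpow_nonneg hu.le _) (Real.exp_nonneg _))
      simp only [hn]
      refine (Integrable.mul_const ?_ _).restrict
      exact integrable_rpow_neg_one_add_norm_sq (by simp; linarith)
  refine hg.mono ?_ (Filter.Eventually.of_forall fun p => ?_)
  · refine Measurable.aestronglyMeasurable ?_
    unfold Function.uncurry
    fun_prop
  · simp only [Function.uncurry, norm_mul _ (Real.cos _)]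
    exact mul_le_of_le_one_right (norm_nonneg _) (Real.abs_cos_le_one _)

/-- (2Γ(α+1/2)/√π)·∫₀^{π/2} cos^{2α−1}v · cos(2√x·tan v) dv = ∫₀^∞ u^{α−1}e^{−u}e^{−x/u} du. -/
theorem kummer_cosine_eq_laplace (α x : ℝ) (hx : 0 < x) (hα : 0 < α) :
    2 * Real.Gamma (α + 1 / 2) / Real.sqrt Real.pi *
        ∫ v in (0 : ℝ)..(Real.pi / 2),
          Real.cos v ^ (2 * α - 1) * Real.cos (2 * Real.sqrt x * Real.tan v)
      = ∫ u in Set.Ioi (0 : ℝ), u ^ (α - 1) * Real.exp (-u) * Real.exp (-(x / u)) := by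
  have ha : 0 < α + 1 / 2 := by linarith
  have hswap := integral_integral_swap (integrable_uncurry_rpow_mul_exp_mul_cos hα (2 * √x))
  have hL : ∀ t : ℝ, ∫ u in Set.Ioi (0 : ℝ),
      u ^ (α + 1 / 2 - 1) * Real.exp (-((1 + t ^ 2) * u)) * Real.cos (2 * √x * t)
        = Real.Gamma (α + 1 / 2) *
          ((1 / (1 + t ^ 2)) ^ (α + 1 / 2) * Real.cos (2 * √x * t)) := by
    intro t
    rw [MeasureTheory.integral_mul_const,
      Real.integral_rpow_mul_exp_neg_mul_Ioi ha (by positivity)]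
    ring
  have hR : ∀ u ∈ Set.Ioi (0 : ℝ), ∫ t in Set.Ioi (0 : ℝ),
      u ^ (α + 1 / 2 - 1) * Real.exp (-((1 + t ^ 2) * u)) * Real.cos (2 * √x * t)
        = √Real.pi / 2 * (u ^ (α - 1) * Real.exp (-u) * Real.exp (-(x / u))) := by
    intro u hu
    have hu : 0 < u := hu
    have h1 : ∀ t : ℝ,
        u ^ (α + 1 / 2 - 1) * Real.exp (-((1 + t ^ 2) * u)) * Real.cos (2 * √x * t)
          = u ^ (α + 1 / 2 - 1) * Real.exp (-u) *
            (Real.exp (-(u * t ^ 2)) * Real.cos (2 * √x * t)) := by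
      intro t
      rw [show -((1 + t ^ 2) * u) = -u + -(u * t ^ 2) by ring, Real.exp_add]
      ring
    simp only [h1]
    rw [MeasureTheory.integral_const_mul, integral_Ioi_exp_neg_mul_sq_mul_cos hu, mul_pow,
      Real.sq_sqrt hx.le, show 2 ^ 2 * x / (4 * u) = x / u by field_simp; norm_num,
      Real.sqrt_div Real.pi_pos.le,
      show α + 1 / 2 - 1 = (α - 1) + 1 / 2 by ring, Real.rpow_add hu, ← Real.sqrt_eq_rpow]
    have : √u ≠ 0 := (Real.sqrt_pos.2 hu).ne'
    field_simp
  simp only [hL] at hswap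
  rw [setIntegral_congr_fun measurableSet_Ioi hR, MeasureTheory.integral_const_mul,
    MeasureTheory.integral_const_mul, ← integral_cos_rpow_mul_cos_tan] at hswap
  have hpi : √Real.pi ≠ 0 := (Real.sqrt_pos.2 Real.pi_pos).ne'
  rw [div_mul_eq_mul_div, div_eq_iff hpi]
  linarith
end

section
/- For all real x > 0, 0 < β < 1, and α > β, ∫₀^∞ u^{β−1} e^{−ux} (1+u)^{−α} du = (2·e^{x/2} / sin(βπ)) · ∫₀^{π/2} (2·cos v)^{α−β−1} · cos((x/2)·tan v + (α+β−1)v) dv. -/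
/-!
The identity is Fourier inversion for a correlation of two Gamma densities.

* Writing `(1 + u) ^ (-α)` as a Gamma integral and using Fubini
  (`kummer_integral_swap`), the left-hand integral times `Γ(α)` becomes `Γ(β) * K(x)`, where
  `K(x) = ∫₀^∞ r ^ (α - 1) e ^ (-r) (x + r) ^ (-β) dr`.
* For `x > 0`, `e ^ (-x/2) K(x)` is the correlation of the two kernels
  `t ^ (α - 1) e ^ (-t/2)` and `t ^ (-β) e ^ (-t/2)` on `t > 0` (`gammaCorrelation_eq`). Its
  Fourier transform is `Γ(α) Γ(1 - β) (1/2 - 2πiξ) ^ (-α) (1/2 + 2πiξ) ^ (β - 1)`, by the Gamma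
  integral with complex rate (`integral_rpow_mul_cexp`). This is integrable because `α > β`, and
  the correlation is continuous at `x > 0`, so it can be inverted (`integral_cpowPair`).
* The inversion integrand has even real part, and `4πξ = tan v` turns
  `1/2 ± 2πiξ` into `e ^ (± iv) / (2 cos v)`, which gives the cosine integral
  (`integral_re_eq_cos`). The reflection formula for `Γ(β) Γ(1 - β)` supplies `sin (βπ)`.
-/

open MeasureTheory intervalIntegral

/-! ### Gamma integrals and the Fubini step -/

lemma integrableOn_rpow_mul_exp {a c : ℝ} (ha : 0 < a) (hc : 0 < c) :
    IntegrableOn (fun t : ℝ => t ^ (a - 1) * Real.exp (-(c * t))) (Set.Ioi 0) := by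
  have := integrableOn_rpow_mul_exp_neg_mul_rpow (s := a - 1) (p := 1) (b := c)
    (by linarith) one_pos hc
  simpa using this

lemma integrableOn_rpow_mul_cexp {a : ℝ} {r : ℂ} (ha : 0 < a) (hr : 0 < r.re) :
    IntegrableOn (fun t : ℝ => ((t ^ (a - 1) : ℝ) : ℂ) * Complex.exp (-(r * t)))
      (Set.Ioi 0) := by
  refine (integrableOn_rpow_mul_exp ha hr).mono' (by fun_prop) ?_
  filter_upwards [ae_restrict_mem measurableSet_Ioi] with t ht
  have ht : 0 < t := ht
  rw [norm_mul, Complex.norm_exp, Complex.norm_real, Real.norm_of_nonneg (by positivity)]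
  simp

/-- Gamma integral with a complex rate `r`; it follows from the real case by analytic
continuation in `r` over the right half-plane. -/
lemma integral_rpow_mul_cexp {a : ℝ} {r : ℂ} (ha : 0 < a) (hr : 0 < r.re) :
    ∫ t in Set.Ioi (0 : ℝ), ((t ^ (a - 1) : ℝ) : ℂ) * Complex.exp (-(r * t))
      = (Real.Gamma a : ℂ) * r ^ (-(a : ℂ)) := by
  set U : Set ℂ := {z | 0 < z.re} with hU
  have hUo : IsOpen U := isOpen_lt continuous_const Complex.continuous_re
  have hUc : IsPreconnected U := (convex_halfSpace_re_gt 0).isPreconnected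
  have h1 : DifferentiableOn ℂ (fun r : ℂ => ∫ t in Set.Ioi (0 : ℝ),
      ((t ^ (a - 1) : ℝ) : ℂ) * Complex.exp (-(r * t))) U := by
    intro r hr
    have hr : 0 < r.re := hr
    have hs : {z : ℂ | r.re / 2 < z.re} ∈ nhds r :=
      (isOpen_lt continuous_const Complex.continuous_re).mem_nhds (by
        show r.re / 2 < r.re; linarith)
    refine (_root_.hasDerivAt_integral_of_dominated_loc_of_deriv_le
      (μ := volume.restrict (Set.Ioi (0 : ℝ)))
      (F := fun (z : ℂ) (t : ℝ) => ((t ^ (a - 1) : ℝ) : ℂ) * Complex.exp (-(z * t)))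
      (F' := fun (z : ℂ) (t : ℝ) => ((t ^ (a - 1) : ℝ) : ℂ) * (Complex.exp (-(z * t)) * (-t)))
      -- on `re z > re r / 2` the derivative is dominated by the integrand of exponent `a + 1`
      (bound := fun t => t ^ ((a + 1) - 1) * Real.exp (-((r.re / 2) * t))) hs
      (Filter.Eventually.of_forall fun z => by fun_prop)
      (integrableOn_rpow_mul_cexp ha hr) (by fun_prop) ?_
      (integrableOn_rpow_mul_exp (by linarith) (by linarith))
      ?_).2.differentiableAt.differentiableWithinAt
    · filter_upwards [ae_restrict_mem measurableSet_Ioi] with t ht z hz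
      have ht : 0 < t := ht
      have hz : r.re / 2 < z.re := hz
      rw [norm_mul, norm_mul, Complex.norm_exp, Complex.norm_real,
        Real.norm_of_nonneg (by positivity), norm_neg, Complex.norm_real,
        Real.norm_of_nonneg ht.le, show a + 1 - 1 = (a - 1) + 1 by ring,
        Real.rpow_add_one ht.ne']
      have : Real.exp ((-(z * t)).re) ≤ Real.exp (-((r.re / 2) * t)) := by
        apply Real.exp_le_exp.2
        simp only [Complex.neg_re, Complex.mul_re, Complex.ofReal_re, Complex.ofReal_im]
        nlinarith
      calc _ = t ^ (a - 1) * t * Real.exp ((-(z * t)).re) := by ring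
        _ ≤ _ := by gcongr
    · refine Filter.Eventually.of_forall fun t z _ => ?_
      have : HasDerivAt (fun z : ℂ => -(z * (t : ℂ))) (-(t : ℂ)) z := by
        exact (hasDerivAt_mul_const (t : ℂ)).fun_neg
      exact (this.cexp).const_mul _
  have h2 : DifferentiableOn ℂ (fun r : ℂ => (Real.Gamma a : ℂ) * r ^ (-(a : ℂ))) U := by
    intro r hr
    exact ((differentiableAt_id.cpow_const (Or.inl hr)).const_mul _).differentiableWithinAt
  refine AnalyticOnNhd.eqOn_of_preconnected_of_frequently_eq (z₀ := 1)
    (h1.analyticOnNhd hUo) (h2.analyticOnNhd hUo) hUc (by simp [hU]) ?_ hr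
  have ht : Filter.Tendsto (fun t : ℝ => (t : ℂ)) (nhdsWithin 1 {1}ᶜ) (nhdsWithin 1 {1}ᶜ) := by
    refine tendsto_nhdsWithin_iff.2 ⟨?_, ?_⟩
    · exact (Complex.continuous_ofReal.tendsto' 1 1 (by simp)).mono_left nhdsWithin_le_nhds
    · filter_upwards [self_mem_nhdsWithin] with t ht
      simpa using ht
  refine ht.frequently (Filter.Eventually.frequently ?_)
  filter_upwards [nhdsWithin_le_nhds (Ioi_mem_nhds one_pos)] with t ht
  have ht : 0 < t := ht
  have key := Real.integral_rpow_mul_exp_neg_mul_Ioi ha ht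
  have e : (Real.Gamma a : ℂ) * (t : ℂ) ^ (-(a : ℂ)) = (((1 / t) ^ a * Real.Gamma a : ℝ) : ℂ) := by
    rw [one_div, Real.inv_rpow ht.le, ← Real.rpow_neg ht.le]
    push_cast [Complex.ofReal_cpow ht.le]
    ring
  rw [e, ← key, ← integral_complex_ofReal]
  refine integral_congr_ae (Filter.Eventually.of_forall fun s => ?_)
  push_cast
  ring

/-- Writing `(1 + u) ^ (-α)` as a Gamma integral and swapping the order of integration. -/
lemma kummer_integral_swap {α β x : ℝ} (hx : 0 < x) (hβ : 0 < β) (hα : 0 < α) :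
    Real.Gamma α * ∫ u in Set.Ioi (0 : ℝ), u ^ (β - 1) * Real.exp (-(u * x)) * (1 + u) ^ (-α)
      = Real.Gamma β * ∫ r in Set.Ioi (0 : ℝ), r ^ (α - 1) * Real.exp (-r) * (x + r) ^ (-β) := by
  let F : ℝ → ℝ → ℝ := fun u r =>
    (u ^ (β - 1) * Real.exp (-(u * x))) * (r ^ (α - 1) * Real.exp (-((1 + u) * r)))
  have hinner : ∀ {c a : ℝ}, 0 < c → 0 < a →
      ∫ t in Set.Ioi (0 : ℝ), t ^ (a - 1) * Real.exp (-(c * t)) = Real.Gamma a * c ^ (-a) := by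
    intro c a hc ha
    rw [Real.integral_rpow_mul_exp_neg_mul_Ioi ha hc, one_div, Real.inv_rpow hc.le,
      ← Real.rpow_neg hc.le, mul_comm]
  have h1 : ∀ u ∈ Set.Ioi (0 : ℝ), ∫ r in Set.Ioi (0 : ℝ), F u r
      = Real.Gamma α * (u ^ (β - 1) * Real.exp (-(u * x)) * (1 + u) ^ (-α)) := by
    intro u hu
    have hu : 0 < u := hu
    simp only [F]
    rw [MeasureTheory.integral_const_mul, hinner (by linarith) hα]
    ring
  have h2 : ∀ r ∈ Set.Ioi (0 : ℝ), ∫ u in Set.Ioi (0 : ℝ), F u r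
      = Real.Gamma β * (r ^ (α - 1) * Real.exp (-r) * (x + r) ^ (-β)) := by
    intro r hr
    have hr : 0 < r := hr
    have : ∀ u, F u r = (r ^ (α - 1) * Real.exp (-r)) *
        (u ^ (β - 1) * Real.exp (-((x + r) * u))) := by
      intro u
      have e : Real.exp (-(u * x)) * Real.exp (-((1 + u) * r))
          = Real.exp (-r) * Real.exp (-((x + r) * u)) := by
        rw [← Real.exp_add, ← Real.exp_add]; ring_nf
      simp only [F]
      linear_combination (u ^ (β - 1) * r ^ (α - 1)) * e
    simp_rw [this]
    rw [MeasureTheory.integral_const_mul, hinner (by linarith) hβ]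
    ring
  have hint : Integrable (Function.uncurry F)
      ((volume.restrict (Set.Ioi (0 : ℝ))).prod (volume.restrict (Set.Ioi (0 : ℝ)))) := by
    have hmeas : Measurable (Function.uncurry F) := by
      simp only [F, Function.uncurry_def]
      fun_prop
    rw [integrable_prod_iff hmeas.aestronglyMeasurable]
    constructor
    · filter_upwards [ae_restrict_mem measurableSet_Ioi] with u hu
      have hu : 0 < u := hu
      have := (integrableOn_rpow_mul_exp hα (show 0 < 1 + u by linarith)).const_mul
        (u ^ (β - 1) * Real.exp (-(u * x)))
      exact this
    · have : ∀ u ∈ Set.Ioi (0 : ℝ), ∫ r in Set.Ioi (0 : ℝ), ‖Function.uncurry F (u, r)‖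
          = Real.Gamma α * (u ^ (β - 1) * Real.exp (-(u * x)) * (1 + u) ^ (-α)) := by
        intro u hu
        rw [← h1 u hu]
        refine setIntegral_congr_fun measurableSet_Ioi fun r hr => ?_
        have hu : 0 < u := hu
        have hr : 0 < r := hr
        exact Real.norm_of_nonneg (by simp only [F, Function.uncurry_apply_pair]; positivity)
      refine Integrable.mono' ((integrableOn_rpow_mul_exp hβ hx).const_mul (Real.Gamma α))
        hmeas.norm.stronglyMeasurable.integral_prod_right.aestronglyMeasurable ?_
      filter_upwards [ae_restrict_mem measurableSet_Ioi] with u hu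
      rw [this u hu]
      have hu : 0 < u := hu
      have hG := Real.Gamma_pos_of_pos hα
      rw [Real.norm_of_nonneg (by positivity), mul_comm x u]
      have : (1 + u) ^ (-α) ≤ 1 :=
        Real.rpow_le_one_of_one_le_of_nonpos (by linarith) (by linarith)
      exact mul_le_mul_of_nonneg_left (mul_le_of_le_one_right (by positivity) this) hG.le
  rw [← MeasureTheory.integral_const_mul, ← MeasureTheory.integral_const_mul, ← setIntegral_congr_fun measurableSet_Ioi h1,
    ← setIntegral_congr_fun measurableSet_Ioi h2]
  exact integral_integral_swap hint

/-! ### Fourier inversion for the correlation of Gamma kernels -/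

open FourierTransform ContinuousLinearMap

/-- The one-sided Gamma-type kernel `t ^ (a - 1) * exp (-t / 2)` on `t > 0`, extended by zero
to the real line and regarded as complex valued so that it can be Fourier transformed. -/
noncomputable def gammaKernel (a : ℝ) : ℝ → ℂ :=
  (Set.Ioi (0 : ℝ)).indicator fun t => ((t ^ (a - 1) * Real.exp (-((1 / 2) * t)) : ℝ) : ℂ)

lemma integrable_gammaKernel {a : ℝ} (ha : 0 < a) : Integrable (gammaKernel a) := by
  rw [gammaKernel, integrable_indicator_iff measurableSet_Ioi]
  exact (integrableOn_rpow_mul_exp ha (by norm_num : (0 : ℝ) < 1 / 2)).ofReal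

lemma fourier_gammaKernel {a : ℝ} (ha : 0 < a) (ξ : ℝ) :
    𝓕 (gammaKernel a) ξ
      = (Real.Gamma a : ℂ) * (1 / 2 + 2 * Real.pi * ξ * Complex.I) ^ (-(a : ℂ)) := by
  rw [Real.fourier_real_eq_integral_exp_smul, ← integral_rpow_mul_cexp ha (by simp),
    ← MeasureTheory.integral_indicator measurableSet_Ioi]
  refine integral_congr_ae (Filter.Eventually.of_forall fun t => ?_)
  by_cases ht : t ∈ Set.Ioi (0 : ℝ)
  · simp only [gammaKernel, Set.indicator_of_mem ht, smul_eq_mul]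
    push_cast
    rw [mul_left_comm, ← Complex.exp_add]
    ring_nf
  · simp [gammaKernel, Set.indicator_of_notMem ht]

lemma fourier_gammaKernel_neg {a : ℝ} (ha : 0 < a) (ξ : ℝ) :
    𝓕 (fun t => gammaKernel a (-t)) ξ
      = (Real.Gamma a : ℂ) * (1 / 2 - 2 * Real.pi * ξ * Complex.I) ^ (-(a : ℂ)) := by
  rw [← Real.fourierInv_eq_fourier_comp_neg, Real.fourierInv_eq_fourier_neg,
    fourier_gammaKernel ha]
  push_cast
  ring_nf

/-- Correlation of two Gamma kernels: the function to which Fourier inversion is applied. -/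
noncomputable def gammaCorrelation (α β : ℝ) : ℝ → ℂ :=
  convolution (fun t => gammaKernel α (-t)) (gammaKernel (1 - β)) (mul ℂ ℂ) volume

lemma gammaCorrelation_eq {α β y : ℝ} (hy : 0 < y) :
    gammaCorrelation α β y = ((Real.exp (-(y / 2)) *
      ∫ r in Set.Ioi (0 : ℝ), r ^ (α - 1) * Real.exp (-r) * (y + r) ^ (-β) : ℝ) : ℂ) := by
  have h1 : gammaCorrelation α β y = ∫ t, gammaKernel α t * gammaKernel (1 - β) (y + t) := by
    rw [gammaCorrelation, convolution_def,
      ← integral_neg_eq_self (fun t => gammaKernel α t * gammaKernel (1 - β) (y + t))]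
    simp [sub_eq_add_neg]
  rw [h1, ← MeasureTheory.integral_const_mul, ← integral_complex_ofReal,
    ← MeasureTheory.integral_indicator measurableSet_Ioi]
  refine integral_congr_ae (Filter.Eventually.of_forall fun t => ?_)
  by_cases ht : t ∈ Set.Ioi (0 : ℝ)
  · have ht' : 0 < t := ht
    have hyt : y + t ∈ Set.Ioi (0 : ℝ) := add_pos hy ht'
    have e : Real.exp (-((1 / 2) * t)) * Real.exp (-((1 / 2) * (y + t)))
        = Real.exp (-(y / 2)) * Real.exp (-t) := by
      rw [← Real.exp_add, ← Real.exp_add]; ring_nf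
    simp only [gammaKernel, Set.indicator_of_mem ht, Set.indicator_of_mem hyt]
    rw [← Complex.ofReal_mul]
    congr 1
    rw [show 1 - β - 1 = -β by ring]
    linear_combination (t ^ (α - 1) * (y + t) ^ (-β)) * e
  · simp [gammaKernel, Set.indicator_of_notMem ht]

lemma continuousAt_gammaCorrelation {α β x : ℝ} (hα : 0 < α) (hβ : 0 < β) (hx : 0 < x) :
    ContinuousAt (gammaCorrelation α β) x := by
  have h : ContinuousAt (fun y : ℝ => ((Real.exp (-(y / 2)) *
      ∫ r in Set.Ioi (0 : ℝ), r ^ (α - 1) * Real.exp (-r) * (y + r) ^ (-β) : ℝ) : ℂ)) x := by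
    refine Complex.continuous_ofReal.continuousAt.comp (ContinuousAt.mul (by fun_prop) ?_)
    refine MeasureTheory.continuousAt_of_dominated
      (bound := fun r => (r ^ (α - 1) * Real.exp (-(1 * r))) * (x / 2) ^ (-β))
      (Filter.Eventually.of_forall fun y => by fun_prop) ?_
      ((integrableOn_rpow_mul_exp hα one_pos).mul_const _) ?_
    · filter_upwards [Ioi_mem_nhds (half_lt_self hx)] with y hy
      filter_upwards [ae_restrict_mem measurableSet_Ioi] with r hr
      have hy : x / 2 < y := hy
      have hr : 0 < r := hr
      have hy0 : 0 < y := by linarith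
      rw [Real.norm_of_nonneg (by positivity), one_mul]
      exact mul_le_mul_of_nonneg_left
        (Real.rpow_le_rpow_of_nonpos (by linarith) (by linarith) (by linarith)) (by positivity)
    · filter_upwards [ae_restrict_mem measurableSet_Ioi] with r hr
      have hr : 0 < r := hr
      refine continuousAt_const.mul (ContinuousAt.rpow_const (by fun_prop) (Or.inl ?_))
      exact (add_pos hx hr).ne'
  refine h.congr ?_
  filter_upwards [Ioi_mem_nhds hx] with y hy
  exact (gammaCorrelation_eq hy).symm

/-- The Fourier-side integrand `(1/2 + 2πiξ) ^ (β-1) * (1/2 - 2πiξ) ^ (-α)`. -/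
noncomputable def cpowPair (α β ξ : ℝ) : ℂ :=
  (1 / 2 - 2 * Real.pi * ξ * Complex.I) ^ (-(α : ℂ)) *
    (1 / 2 + 2 * Real.pi * ξ * Complex.I) ^ (-((1 - β : ℝ) : ℂ))

lemma integrable_cpowPair {α β : ℝ} (h : β < α) : Integrable (cpowPair α β) := by
  have hint := (integrable_rpow_neg_one_add_norm_sq (E := ℝ) (μ := volume) (r := α - β + 1)
    (by simpa using h)).const_mul ((1 / 4 : ℝ) ^ (-(α - β + 1) / 2))
  have hmeas : Measurable (cpowPair α β) := by
    unfold cpowPair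
    fun_prop
  refine hint.mono' hmeas.aestronglyMeasurable (Filter.Eventually.of_forall fun ξ => ?_)
  have n1 : ‖(1 / 2 - 2 * Real.pi * ξ * Complex.I : ℂ)‖
      = (1 / 4 + (2 * Real.pi * ξ) ^ 2) ^ (1 / 2 : ℝ) := by
    rw [Complex.norm_def, Complex.normSq_apply, ← Real.sqrt_eq_rpow]
    congr 1
    simp
    ring
  have n2 : ‖(1 / 2 + 2 * Real.pi * ξ * Complex.I : ℂ)‖
      = (1 / 4 + (2 * Real.pi * ξ) ^ 2) ^ (1 / 2 : ℝ) := by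
    rw [Complex.norm_def, Complex.normSq_apply, ← Real.sqrt_eq_rpow]
    congr 1
    simp
    ring
  have hpos : 0 < 1 / 4 + (2 * Real.pi * ξ) ^ 2 := by positivity
  have hle : 1 / 4 * (1 + ‖ξ‖ ^ 2) ≤ 1 / 4 + (2 * Real.pi * ξ) ^ 2 := by
    rw [Real.norm_eq_abs, sq_abs]
    nlinarith [Real.pi_gt_three, sq_nonneg ξ, mul_nonneg (sq_nonneg ξ) (sq_nonneg (Real.pi - 3)),
      mul_nonneg (sq_nonneg ξ) (sub_nonneg.2 Real.pi_gt_three.le)]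
  rw [cpowPair, norm_mul, ← Complex.ofReal_neg, ← Complex.ofReal_neg, Complex.norm_cpow_real,
    Complex.norm_cpow_real, n1, n2, ← Real.rpow_mul hpos.le, ← Real.rpow_mul hpos.le,
    ← Real.rpow_add hpos, ← Real.mul_rpow (by norm_num) (by positivity)]
  rw [show 1 / 2 * -α + 1 / 2 * -(1 - β) = -(α - β + 1) / 2 by ring]
  exact Real.rpow_le_rpow_of_nonpos (by positivity) hle (by linarith)

/-- Fourier inversion for `gammaCorrelation`. -/
lemma integral_cpowPair {α β x : ℝ} (hx : 0 < x) (hβ0 : 0 < β) (hβ1 : β < 1) (h : β < α) :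
    (Real.Gamma α * Real.Gamma (1 - β) : ℝ) *
      ∫ ξ : ℝ, Complex.exp ((2 * Real.pi * ξ * x : ℝ) * Complex.I) * cpowPair α β ξ
    = gammaCorrelation α β x := by
  have hα : 0 < α := hβ0.trans h
  have hF : ∀ ξ, 𝓕 (gammaCorrelation α β) ξ
      = (Real.Gamma α * Real.Gamma (1 - β) : ℝ) * cpowPair α β ξ := by
    intro ξ
    rw [gammaCorrelation, Real.fourier_mul_convolution_eq (integrable_gammaKernel hα).comp_neg
      (integrable_gammaKernel (sub_pos.2 hβ1)), fourier_gammaKernel_neg hα,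
      fourier_gammaKernel (sub_pos.2 hβ1), cpowPair]
    push_cast
    ring
  have hint : Integrable (gammaCorrelation α β) :=
    (integrable_gammaKernel hα).comp_neg.integrable_convolution _
      (integrable_gammaKernel (sub_pos.2 hβ1))
  have hFint : Integrable (𝓕 (gammaCorrelation α β)) := by
    rw [funext hF]
    exact (integrable_cpowPair h).const_mul _
  rw [← hint.fourierInv_fourier_eq hFint (continuousAt_gammaCorrelation hα hβ0 hx),
    Real.fourierInv_eq', ← MeasureTheory.integral_const_mul]
  refine integral_congr_ae (Filter.Eventually.of_forall fun ξ => ?_)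
  simp only [hF, smul_eq_mul]
  rw [show 2 * Real.pi * inner ℝ ξ x = 2 * Real.pi * ξ * x by simp; ring]
  ring

/-! ### The tangent substitution -/

/-- At `ξ = tan v / (4π)` the bases `1/2 ± 2πiξ` both have modulus
`1 / (2 cos v)`, and their arguments are `± v`. -/
lemma re_integrand_tan {α β x v : ℝ} (hv : v ∈ Set.Ioo 0 (Real.pi / 2)) :
    (Complex.exp ((2 * Real.pi * (Real.tan v / (4 * Real.pi)) * x : ℝ) * Complex.I) *
      cpowPair α β (Real.tan v / (4 * Real.pi))).re
    = (2 * Real.cos v) ^ (α - β + 1) *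
      Real.cos (x / 2 * Real.tan v + (α + β - 1) * v) := by
  have hc : 0 < Real.cos v := Real.cos_pos_of_mem_Ioo ⟨by linarith [hv.1, Real.pi_pos], hv.2⟩
  have hpi := Real.pi_pos
  have hc2 : (0 : ℝ) < 2 * Real.cos v := by positivity
  set L := Real.log (2 * Real.cos v) with hL
  have hE : Complex.exp (-(L : ℂ)) = ((2 * Real.cos v : ℝ) : ℂ)⁻¹ := by
    rw [← Complex.ofReal_neg, ← Complex.ofReal_exp, Real.exp_neg, Real.exp_log hc2]
    simp
  have hcC : (Complex.cos v) ≠ 0 := by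
    rw [← Complex.ofReal_cos]; exact_mod_cast hc.ne'
  have hpiC : (Real.pi : ℂ) ≠ 0 := by exact_mod_cast hpi.ne'
  have e1 : (1 / 2 + 2 * Real.pi * ((Real.tan v / (4 * Real.pi) : ℝ) : ℂ) * Complex.I : ℂ)
      = Complex.exp (-(L : ℂ) + v * Complex.I) := by
    rw [Complex.exp_add, hE, Complex.exp_mul_I, Real.tan_eq_sin_div_cos]
    push_cast
    field_simp
    ring
  have e2 : (1 / 2 - 2 * Real.pi * ((Real.tan v / (4 * Real.pi) : ℝ) : ℂ) * Complex.I : ℂ)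
      = Complex.exp (-(L : ℂ) - v * Complex.I) := by
    rw [sub_eq_add_neg (-(L : ℂ)), ← neg_mul, Complex.exp_add, hE, Complex.exp_mul_I,
      Complex.cos_neg, Complex.sin_neg, Real.tan_eq_sin_div_cos]
    push_cast
    field_simp
    ring
  have l1 : Complex.log (Complex.exp (-(L : ℂ) + v * Complex.I)) = -(L : ℂ) + v * Complex.I :=
    Complex.log_exp (by simp; linarith [hv.1]) (by simp; linarith [hv.2])
  have l2 : Complex.log (Complex.exp (-(L : ℂ) - v * Complex.I)) = -(L : ℂ) - v * Complex.I :=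
    Complex.log_exp (by simp; linarith [hv.2]) (by simp; linarith [hv.1])
  have e3 : 2 * Real.pi * (Real.tan v / (4 * Real.pi)) * x = x / 2 * Real.tan v := by
    field_simp
    ring
  rw [cpowPair, e1, e2, Complex.cpow_def_of_ne_zero (Complex.exp_ne_zero _),
    Complex.cpow_def_of_ne_zero (Complex.exp_ne_zero _), l1, l2, ← Complex.exp_add,
    ← Complex.exp_add, e3]
  have e4 : (((x / 2 * Real.tan v : ℝ) : ℂ) * Complex.I +
      ((-(L : ℂ) - v * Complex.I) * -(α : ℂ) +
        (-(L : ℂ) + v * Complex.I) * -((1 - β : ℝ) : ℂ)))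
      = ((L * (α - β + 1) : ℝ) : ℂ)
        + ((x / 2 * Real.tan v + (α + β - 1) * v : ℝ) : ℂ) * Complex.I := by
    push_cast
    ring
  rw [e4, Complex.exp_re, Real.rpow_def_of_pos hc2, Complex.add_re,
    Complex.add_im, Complex.re_ofReal_mul, Complex.im_ofReal_mul,
    Complex.ofReal_re, Complex.ofReal_im, Complex.I_re, Complex.I_im, mul_zero, add_zero, mul_one,
    zero_add]

/-- Reversing `ξ` conjugates the integrand, so its real part is even. -/
lemma re_integrand_abs (α β x ξ : ℝ) :
    (Complex.exp ((2 * Real.pi * |ξ| * x : ℝ) * Complex.I) * cpowPair α β |ξ|).re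
    = (Complex.exp ((2 * Real.pi * ξ * x : ℝ) * Complex.I) * cpowPair α β ξ).re := by
  rcases abs_choice ξ with h | h
  · rw [h]
  rw [h, ← Complex.conj_re]
  congr 1
  have harg : ∀ z : ℂ, z.re = 1 / 2 → z.arg ≠ Real.pi := by
    intro z hz hp
    have := (Complex.arg_eq_pi_iff.1 hp).1
    linarith
  simp only [cpowPair, map_mul, ← Complex.exp_conj]
  rw [← Complex.ofReal_neg, ← Complex.ofReal_neg]
  have hcp : ∀ (z : ℂ) (s : ℝ), z.re = 1 / 2 →
      (starRingEnd ℂ) (z ^ (s : ℂ)) = (starRingEnd ℂ) z ^ (s : ℂ) := by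
    intro z s hz
    rw [Complex.conj_cpow _ _ (harg z hz), Complex.conj_ofReal]
  rw [hcp _ _ (by simp), hcp _ _ (by simp)]
  have h2 : (starRingEnd ℂ) 2 = 2 := map_ofNat _ 2
  simp [sub_eq_add_neg, h2]

lemma integral_re_eq_cos {α β x : ℝ} :
    ∫ ξ : ℝ, (Complex.exp ((2 * Real.pi * ξ * x : ℝ) * Complex.I) * cpowPair α β ξ).re
    = 2 / Real.pi * ∫ v in (0 : ℝ)..(Real.pi / 2), (2 * Real.cos v) ^ (α - β - 1)
            * Real.cos (x / 2 * Real.tan v + (α + β - 1) * v) := by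
  have hpi := Real.pi_pos
  set f : ℝ → ℝ := fun ξ =>
    (Complex.exp ((2 * Real.pi * ξ * x : ℝ) * Complex.I) * cpowPair α β ξ).re with hf
  have h1 : ∫ ξ, f ξ = 2 * ∫ ξ in Set.Ioi (0 : ℝ), f ξ := by
    rw [← integral_comp_abs]
    exact integral_congr_ae
      (Filter.Eventually.of_forall fun ξ => (re_integrand_abs α β x ξ).symm)
  have himg : (fun v => Real.tan v / (4 * Real.pi)) '' Set.Ioo 0 (Real.pi / 2) = Set.Ioi 0 := by
    ext y
    constructor
    · rintro ⟨v, hv, rfl⟩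
      exact div_pos (Real.tan_pos_of_pos_of_lt_pi_div_two hv.1 hv.2) (by positivity)
    · intro hy
      have hy : 0 < y := hy
      refine ⟨Real.arctan (4 * Real.pi * y),
        ⟨Real.arctan_pos.2 (by positivity), Real.arctan_lt_pi_div_two _⟩, ?_⟩
      simp only [Real.tan_arctan]
      field_simp
  have hsub : Set.Ioo 0 (Real.pi / 2) ⊆ Set.Ioo (-(Real.pi / 2)) (Real.pi / 2) :=
    Set.Ioo_subset_Ioo_left (by linarith)
  have hinj : Set.InjOn (fun v => Real.tan v / (4 * Real.pi)) (Set.Ioo 0 (Real.pi / 2)) := by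
    intro a ha b hb hab
    refine Real.injOn_tan (hsub ha) (hsub hb) ?_
    have hab : Real.tan a / (4 * Real.pi) = Real.tan b / (4 * Real.pi) := hab
    exact (div_left_inj' (by positivity)).1 hab
  rw [h1, ← himg, integral_image_eq_integral_abs_deriv_smul measurableSet_Ioo
    (fun v hv => ((Real.hasDerivAt_tan_of_mem_Ioo (hsub hv)).div_const _).hasDerivWithinAt) hinj,
    integral_of_le (by positivity), ← integral_Ioc_eq_integral_Ioo,
    ← MeasureTheory.integral_const_mul, ← MeasureTheory.integral_const_mul,
    integral_Ioc_eq_integral_Ioo, integral_Ioc_eq_integral_Ioo]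
  refine setIntegral_congr_fun measurableSet_Ioo fun v hv => ?_
  have hc : 0 < Real.cos v := Real.cos_pos_of_mem_Ioo (hsub hv)
  have hr := re_integrand_tan (α := α) (β := β) (x := x) hv
  simp only [hf, smul_eq_mul]
  rw [hr, abs_of_pos (by positivity), show α - β + 1 = (α - β - 1) + 2 by ring,
    Real.rpow_add (by positivity), Real.rpow_two]
  field_simp
  ring

/-- ∫₀^∞ u^{β−1} e^{−ux}(1+u)^{−α} du
      = (2e^{x/2}/sin(βπ))·∫₀^{π/2} (2cos v)^{α−β−1}·cos((x/2)tan v + (α+β−1)v) dv. -/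
theorem kummer_integral_cosine_form (α β x : ℝ) (hx : 0 < x) (hβ0 : 0 < β) (hβ1 : β < 1)
    (hαβ : β < α) :
    ∫ u in Set.Ioi (0 : ℝ), u ^ (β - 1) * Real.exp (-(u * x)) * (1 + u) ^ (-α)
      = 2 * Real.exp (x / 2) / Real.sin (β * Real.pi) *
        ∫ v in (0 : ℝ)..(Real.pi / 2),
          (2 * Real.cos v) ^ (α - β - 1)
            * Real.cos (x / 2 * Real.tan v + (α + β - 1) * v) := by
  have hα : 0 < α := hβ0.trans hαβ
  have hpi := Real.pi_pos
  have hint : Integrable fun ξ : ℝ =>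
      Complex.exp ((2 * Real.pi * ξ * x : ℝ) * Complex.I) * cpowPair α β ξ := by
    refine (integrable_cpowPair hαβ).bdd_mul (c := 1) (by fun_prop)
      (Filter.Eventually.of_forall fun ξ => ?_)
    rw [Complex.norm_exp_ofReal_mul_I]
  have hinv := congrArg Complex.re (integral_cpowPair hx hβ0 hβ1 hαβ)
  rw [gammaCorrelation_eq hx, Complex.re_ofReal_mul, Complex.ofReal_re] at hinv
  have hre : (∫ ξ : ℝ, Complex.exp ((2 * Real.pi * ξ * x : ℝ) * Complex.I) * cpowPair α β ξ).re
      = _ := (integral_re hint).symm.trans integral_re_eq_cos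
  rw [hre] at hinv
  have hsw := kummer_integral_swap hx hβ0 hα
  have hrefl := Real.Gamma_mul_Gamma_one_sub β
  have hsin : 0 < Real.sin (Real.pi * β) :=
    Real.sin_pos_of_pos_of_lt_pi (by positivity) (by nlinarith)
  have hG := (Real.Gamma_pos_of_pos hα).ne'
  have hexp : Real.exp (x / 2) * Real.exp (-(x / 2)) = 1 := by
    rw [← Real.exp_add]; simp
  rw [mul_comm β]
  refine mul_left_cancel₀ hG (hsw.trans ?_)
  generalize (∫ v in (0 : ℝ)..(Real.pi / 2), (2 * Real.cos v) ^ (α - β - 1)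
            * Real.cos (x / 2 * Real.tan v + (α + β - 1) * v)) = J at hinv ⊢
  generalize (∫ r in Set.Ioi (0 : ℝ), r ^ (α - 1) * Real.exp (-r) * (x + r) ^ (-β)) = K
    at hinv ⊢
  have hK : K = Real.exp (x / 2) * (Real.Gamma α * Real.Gamma (1 - β) * (2 / Real.pi * J)) := by
    linear_combination (-K) * hexp - Real.exp (x / 2) * hinv
  rw [hK]
  have hrefl' : Real.Gamma β * Real.Gamma (1 - β) * (2 / Real.pi) = 2 / Real.sin (Real.pi * β) := by
    rw [hrefl]
    field_simp
  linear_combination (Real.exp (x / 2) * Real.Gamma α * J) * hrefl'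
end
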